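/- arXiv:1702.00136 — 2 statements merged into one kernel-verified Lean document; each statement's English description precedes it below -/
import Mathlib

section
/- Assume the energy functional E satisfies conditions (E1), (E2) and (E3). Then for every initial datum u₀ ∈ X that is stable at t = 0, i.e. E(0,u₀) ≤ E(0,v) + d(u₀,v) for every v ∈ X, there exists at least one Energetic solution u of the rate-independent system (X,E,d) with u(0) = u₀. -/
open Filter MeasureTheory Topology Set
open scoped ENNReal

noncomputable section

variable {X : Type*} [MetricSpace X]

/-- Pointwise total variation of `u : ℝ → X` on a set `S ⊆ ℝ` (with value in `ℝ≥0∞`),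
defined as the supremum over finite increasing families of points of `S` of the sums of the
consecutive distances. -/
def varD (u : ℝ → X) (S : Set ℝ) : ℝ≥0∞ :=
  ⨆ (M : ℕ) (t : ℕ → ℝ)
    (_ : (∀ j, j ≤ M → t j ∈ S) ∧ ∀ j, j < M → t j < t (j + 1)),
    ∑ j ∈ Finset.range M, edist (u (t j)) (u (t (j + 1)))

/-- Left limit of `u` at `t`, with the convention that it equals `u 0` for `t ≤ 0`
(curves are thought of as being defined on `[0,T]`). -/
def lLim (u : ℝ → X) (t : ℝ) : X :=
  if t ≤ 0 then u 0 else Function.leftLim u t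

/-- Right limit of `u : [0,T] → X` at `t`, with the convention that it equals `u T` for
`t ≥ T`. -/
def rLim (u : ℝ → X) (T t : ℝ) : X :=
  if T ≤ t then u T else Function.rightLim u t

/-- The jump set of a curve `u : [0,T] → X`. -/
def jumpSet (u : ℝ → X) (T : ℝ) : Set ℝ :=
  {t | t ∈ Icc 0 T ∧ (lLim u t ≠ u t ∨ rLim u T t ≠ u t)}

/-- The metric slope `|DE|(t,u)` of the energy functional `E`. -/
def slopeE (E : ℝ → X → ℝ) (t : ℝ) (u : X) : ℝ≥0∞ :=
  Filter.limsup (fun v => ENNReal.ofReal ((E t u - E t v) / dist u v)) (𝓝[≠] u)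

/-- The metric derivative of a curve `θ : ℝ → X` (via `limUnder`: it coincides with the
metric derivative at every point where the latter exists). -/
def mder (θ : ℝ → X) (r : ℝ) : ℝ :=
  limUnder (𝓝[≠] r) fun s => dist (θ s) (θ r) / |s - r|

/-- `θ` is absolutely continuous on `[a,b]`. -/
def IsAC (θ : ℝ → X) (a b : ℝ) : Prop :=
  ∃ m : ℝ → ℝ, IntegrableOn m (Icc a b) ∧
    ∀ s t : ℝ, a ≤ s → s ≤ t → t ≤ b → dist (θ s) (θ t) ≤ ∫ r in s..t, m r

/-- The viscous jump dissipation cost `v(t,u₋,u₊)`. -/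
def vCost (E : ℝ → X → ℝ) (t : ℝ) (um up : X) : ℝ≥0∞ :=
  ⨅ (r₀ : ℝ) (r₁ : ℝ) (θ : ℝ → X)
    (_ : r₀ ≤ r₁ ∧ IsAC θ r₀ r₁ ∧ θ r₀ = um ∧ θ r₁ = up),
    ∫⁻ r in Ioc r₀ r₁, ENNReal.ofReal (mder θ r) * max (slopeE E t (θ r)) 1

/-- The viscously corrected distance `D_μ(x,y) = d(x,y) + (μ/2) d(x,y)²`. -/
def Dmu (μ : ℝ) (x y : X) : ℝ := dist x y + μ / 2 * dist x y ^ 2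

/-- The residual stability function `R_μ(t,x) = sup_y (E(t,x) − E(t,y) − D_μ(x,y))`. -/
def Rmu (E : ℝ → X → ℝ) (μ t : ℝ) (x : X) : ℝ≥0∞ :=
  ⨆ y : X, ENNReal.ofReal (E t x - E t y - Dmu μ x y)

/-- The holes of a compact set `K ⊆ ℝ` (connected components of `[inf K, sup K] ∖ K`),
identified with the pairs of their endpoints. -/
def holes (K : Set ℝ) : Set (ℝ × ℝ) :=
  {p | p.1 ∈ K ∧ p.2 ∈ K ∧ p.1 < p.2 ∧ Ioo p.1 p.2 ∩ K = ∅}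

/-- The visco-energetic transition cost `Trc_μ(t,θ,K)`. -/
def trCost (E : ℝ → X → ℝ) (μ t : ℝ) (θ : ℝ → X) (K : Set ℝ) : ℝ≥0∞ :=
  varD θ K
    + (∑' p : ↥(holes K),
        ENNReal.ofReal (μ / 2 * dist (θ (p : ℝ × ℝ).1) (θ (p : ℝ × ℝ).2) ^ 2))
    + ∑' s : ↥(K \ {sSup K}), Rmu E μ t (θ (s : ℝ))

/-- The visco-energetic jump dissipation cost `c_μ(t,u₋,u₊)`. -/
def veCost (E : ℝ → X → ℝ) (μ : ℝ) (t : ℝ) (um up : X) : ℝ≥0∞ :=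
  ⨅ (K : Set ℝ) (θ : ℝ → X)
    (_ : K.Nonempty ∧ IsCompact K ∧ ContinuousOn θ K ∧ θ (sInf K) = um ∧ θ (sSup K) = up),
    trCost E μ t θ K

/-- The jump contribution `Jmp_{Δ_e}(u;[t₀,t₁])` of the incremental cost associated with a
jump dissipation cost `e`. -/
def jmpVar (e : ℝ → X → X → ℝ≥0∞) (u : ℝ → X) (T t₀ t₁ : ℝ) : ℝ≥0∞ :=
  (e t₀ (u t₀) (rLim u T t₀) - edist (u t₀) (rLim u T t₀))
    + (e t₁ (lLim u t₁) (u t₁) - edist (lLim u t₁) (u t₁))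
    + ∑' t : ↥(jumpSet u T ∩ Ioo t₀ t₁),
        ((e (t : ℝ) (lLim u (t : ℝ)) (u (t : ℝ)) - edist (lLim u (t : ℝ)) (u (t : ℝ)))
          + (e (t : ℝ) (u (t : ℝ)) (rLim u T (t : ℝ))
              - edist (u (t : ℝ)) (rLim u T (t : ℝ))))

/-- The augmented total variation `Var_{d,e}(u;[t₀,t₁])`. -/
def varAug (e : ℝ → X → X → ℝ≥0∞) (u : ℝ → X) (T t₀ t₁ : ℝ) : ℝ≥0∞ :=
  varD u (Icc t₀ t₁) + jmpVar e u T t₀ t₁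

/-- Condition (E1): lower semicontinuity and compactness of the sublevel sets of the
perturbed functional `F(t,u) = E(t,u) + d(x₀,u)` on `[0,T] × X`. -/
def CondE1 (E : ℝ → X → ℝ) (T : ℝ) (x₀ : X) : Prop :=
  ∀ C : ℝ,
    LowerSemicontinuousOn (fun p : ℝ × X => E p.1 p.2)
      {p : ℝ × X | p.1 ∈ Icc 0 T ∧ E p.1 p.2 + dist x₀ p.2 ≤ C} ∧
    IsCompact {p : ℝ × X | p.1 ∈ Icc 0 T ∧ E p.1 p.2 + dist x₀ p.2 ≤ C}

/-- Condition (E2): power control for the power functional `P`, with constant `CP`. -/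
def CondE2 (E P : ℝ → X → ℝ) (T : ℝ) (x₀ : X) (CP : ℝ) : Prop :=
  0 < CP ∧
    ∀ t ∈ Icc (0 : ℝ) T, ∀ u : X,
      (P t u : EReal) ≤
          Filter.liminf (fun s => (((E t u - E s u) / (t - s) : ℝ) : EReal)) (𝓝[Ico 0 t] t) ∧
        Filter.limsup (fun s => (((E s u - E t u) / (s - t) : ℝ) : EReal)) (𝓝[Ioc t T] t) ≤
          (P t u : EReal) ∧
        |P t u| ≤ CP * (E t u + dist x₀ u)

/-- Condition (E3): conditional upper semicontinuity of the power. -/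
def CondE3 (E P : ℝ → X → ℝ) (T : ℝ) : Prop :=
  ∀ (tn : ℕ → ℝ) (un : ℕ → X) (t : ℝ) (u : X),
    (∀ n, tn n ∈ Icc (0 : ℝ) T) → t ∈ Icc (0 : ℝ) T →
    Tendsto tn atTop (𝓝 t) → Tendsto un atTop (𝓝 u) →
    Tendsto (fun n => E (tn n) (un n)) atTop (𝓝 (E t u)) →
    Filter.limsup (fun n => ((P (tn n) (un n) : ℝ) : EReal)) atTop ≤ (P t u : EReal)

/-- Condition (E3'): upper semicontinuity of the power and lower semicontinuity of the slope
along sequences with bounded energy and slope. -/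
def CondE3' (E P : ℝ → X → ℝ) (T : ℝ) (x₀ : X) : Prop :=
  ∀ (tn : ℕ → ℝ) (un : ℕ → X) (t : ℝ) (u : X),
    (∀ n, tn n ∈ Icc (0 : ℝ) T) → t ∈ Icc (0 : ℝ) T →
    Tendsto tn atTop (𝓝 t) → Tendsto un atTop (𝓝 u) →
    (∃ C : ℝ, ∀ n, E 0 (un n) + dist x₀ (un n) ≤ C) →
    (∃ S : ℝ≥0∞, S ≠ ⊤ ∧ ∀ n, slopeE E (tn n) (un n) ≤ S) →
    slopeE E t u ≤ Filter.liminf (fun n => slopeE E (tn n) (un n)) atTop ∧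
      Filter.limsup (fun n => ((P (tn n) (un n) : ℝ) : EReal)) atTop ≤ (P t u : EReal)

/-- Condition (E4): the chain-rule inequality. -/
def CondE4 (E P : ℝ → X → ℝ) (T : ℝ) : Prop :=
  ∀ u : ℝ → X, IsAC u 0 T →
    IsAC (fun t => E t (u t)) 0 T ∧
      ∀ᵐ t ∂(volume.restrict (Ioo (0 : ℝ) T)),
        DifferentiableAt ℝ (fun s => E s (u s)) t ∧
          ENNReal.ofReal (P t (u t) - deriv (fun s => E s (u s)) t) ≤
            ENNReal.ofReal (mder u t) * slopeE E t (u t)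

/-- Energetic solution of the rate-independent system `(X,E,d)`. -/
def IsEnergeticSol (E P : ℝ → X → ℝ) (T : ℝ) (u : ℝ → X) : Prop :=
  varD u (Icc 0 T) ≠ ⊤ ∧
    ∀ t ∈ Icc (0 : ℝ) T,
      (∀ v : X, E t (u t) ≤ E t v + dist (u t) v) ∧
        E t (u t) + (varD u (Icc 0 t)).toReal =
          E 0 (u 0) + ∫ s in (0 : ℝ)..t, P s (u s)

/-- Balanced Viscosity solution of the rate-independent system `(X,E,d)`. -/
def IsBVSol (E P : ℝ → X → ℝ) (T : ℝ) (u : ℝ → X) : Prop :=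
  varD u (Icc 0 T) ≠ ⊤ ∧
    (∀ t ∈ Icc (0 : ℝ) T \ jumpSet u T, slopeE E t (u t) ≤ 1) ∧
    ∀ t ∈ Icc (0 : ℝ) T,
      varAug (vCost E) u T 0 t ≠ ⊤ ∧
        E t (u t) + (varAug (vCost E) u T 0 t).toReal =
          E 0 (u 0) + ∫ s in (0 : ℝ)..t, P s (u s)

/-- μ-Visco-Energetic solution of the rate-independent system `(X,E,d)`. -/
def IsVESol (E P : ℝ → X → ℝ) (T μ : ℝ) (u : ℝ → X) : Prop :=
  varD u (Icc 0 T) ≠ ⊤ ∧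
    (∀ t ∈ Icc (0 : ℝ) T \ jumpSet u T, ∀ v : X, E t (u t) ≤ E t v + Dmu μ (u t) v) ∧
    ∀ t ∈ Icc (0 : ℝ) T,
      varAug (veCost E μ) u T 0 t ≠ ⊤ ∧
        E t (u t) + (varAug (veCost E μ) u T 0 t).toReal =
          E 0 (u 0) + ∫ s in (0 : ℝ)..t, P s (u s)


/-!
Incremental minimization along a time partition produces stable states whose energy plus discrete
variation grows at most by the work of the power. Along an ultrafilter of partitions of vanishing
mesh the states and their discrete variations converge, at every time, to a curve `u` and a
monotone function `W` whose increments dominate the variation of `u`. Stability is closed and makes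
the energies converge, so (E3) bounds the upper right derivative of `E + W` along `u` by the power
wherever `W` is continuous, that is almost everywhere. Conversely, stability forces the derivative
of `E + D` along `u` to be at least the power for every majorant `D` of the variation, in
particular for the variation function `V` of `u`. Since `V` increases at most as much as `W`, the
Lipschitz functions `E + V` and `E + W` must both be primitives of the power.
-/

section Variation

theorem varD_eq_eVariationOn (u : ℝ → X) (S : Set ℝ) : varD u S = eVariationOn u S := by
  rw [eVariationOn.eVariationOn_eq_strictMonoOn]
  refine le_antisymm (iSup_le fun M => iSup_le fun t => iSup_le fun ht => ?_) (iSup_le ?_)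
  · refine le_iSup_of_le ⟨M, t, strictMonoOn_Iic_of_lt_succ ht.2, ht.1⟩ ?_
    simp only [edist_comm, le_refl]
  · rintro ⟨M, t, ht, htS⟩
    refine le_iSup_of_le M (le_iSup_of_le t (le_iSup_of_le
      ⟨htS, fun j hj => ht hj.le (Nat.succ_le_of_lt hj) j.lt_succ_self⟩ ?_))
    simp only [edist_comm, le_refl]

variable {α Y : Type*} [LinearOrder α]

theorem eVariationOn_le_of_edist_le {Z : Type*} [PseudoEMetricSpace Y] [PseudoEMetricSpace Z]
    {f : α → Y} {g : α → Z} {s : Set α}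
    (h : ∀ a ∈ s, ∀ b ∈ s, a ≤ b → edist (f a) (f b) ≤ edist (g a) (g b)) :
    eVariationOn f s ≤ eVariationOn g s := by
  refine iSup_le fun ⟨n, t, ht, hts⟩ => ?_
  refine (Finset.sum_le_sum fun i _ => ?_).trans (eVariationOn.sum_le ht hts)
  rw [edist_comm, edist_comm (g _)]
  exact h _ (hts i) _ (hts (i + 1)) (ht i.le_succ)

variable [PseudoMetricSpace Y] {u : α → Y} {D : α → ℝ} {s : Set α} {a b : α}

/-- The increments of `D` dominate the distances between the values of `u` on `s`; the smallest
such `D`, up to an additive constant, is the variation function of `u`. -/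
def IsVariationMajorant (u : α → Y) (D : α → ℝ) (s : Set α) : Prop :=
  ∀ ⦃a⦄, a ∈ s → ∀ ⦃b⦄, b ∈ s → a ≤ b → dist (u a) (u b) ≤ D b - D a

theorem IsVariationMajorant.monotoneOn (h : IsVariationMajorant u D s) : MonotoneOn D s :=
  fun _ ha _ hb hab => sub_nonneg.1 (dist_nonneg.trans (h ha hb hab))

theorem IsVariationMajorant.eVariationOn_le (h : IsVariationMajorant u D s) (ha : a ∈ s)
    (hb : b ∈ s) : eVariationOn u (s ∩ Icc a b) ≤ ENNReal.ofReal (D b - D a) := by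
  rw [← h.monotoneOn.eVariationOn_eq ha hb]
  refine eVariationOn_le_of_edist_le fun x hx y hy hxy => ?_
  rw [edist_dist, edist_dist, dist_comm (D x), Real.dist_eq]
  exact ENNReal.ofReal_le_ofReal ((h hx.1 hy.1 hxy).trans (le_abs_self _))

theorem IsVariationMajorant.locallyBoundedVariationOn (h : IsVariationMajorant u D s) :
    LocallyBoundedVariationOn u s :=
  fun _ _ ha hb => ((h.eVariationOn_le ha hb).trans_lt ENNReal.ofReal_lt_top).ne

theorem variationOnFromTo_sub_variationOnFromTo {Y : Type*} [PseudoEMetricSpace Y] {u : α → Y}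
    (h : LocallyBoundedVariationOn u s) {c : α} (hc : c ∈ s) (ha : a ∈ s) (hb : b ∈ s)
    (hab : a ≤ b) : variationOnFromTo u s c b - variationOnFromTo u s c a =
      (eVariationOn u (s ∩ Icc a b)).toReal := by
  rw [← variationOnFromTo.add h hc ha hb, add_sub_cancel_left, variationOnFromTo.eq_of_le u s hab]

theorem isVariationMajorant_variationOnFromTo (h : LocallyBoundedVariationOn u s) {c : α}
    (hc : c ∈ s) : IsVariationMajorant u (variationOnFromTo u s c) s := by
  intro a ha b hb hab
  rw [variationOnFromTo_sub_variationOnFromTo h hc ha hb hab, dist_edist]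
  exact ENNReal.toReal_mono (h a b ha hb)
    (eVariationOn.edist_le u ⟨ha, le_rfl, hab⟩ ⟨hb, hab, le_rfl⟩)

theorem IsVariationMajorant.variationOnFromTo_sub_le (h : IsVariationMajorant u D s) {c : α}
    (hc : c ∈ s) (ha : a ∈ s) (hb : b ∈ s) (hab : a ≤ b) :
    variationOnFromTo u s c b - variationOnFromTo u s c a ≤ D b - D a := by
  rw [variationOnFromTo_sub_variationOnFromTo h.locallyBoundedVariationOn hc ha hb hab]
  exact ENNReal.toReal_le_of_le_ofReal (sub_nonneg.2 (h.monotoneOn ha hb hab))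
    (h.eVariationOn_le ha hb)

/-- The total length of the first `k` steps of a discrete trajectory `U`. -/
def discreteVariation (U : ℕ → Y) (k : ℕ) : ℝ := ∑ j ∈ Finset.range k, dist (U j) (U (j + 1))

theorem isVariationMajorant_discreteVariation (U : ℕ → Y) :
    IsVariationMajorant U (discreteVariation U) univ := fun a _ b _ hab => by
  rw [discreteVariation, discreteVariation, ← Finset.sum_Ico_eq_sub _ hab]
  exact dist_le_Ico_sum_dist U hab

end Variation

section RealAnalysis

variable {f f' G H p : ℝ → ℝ} {a b : ℝ}

theorem le_gronwallBound_of_liminf_deriv_left_ge {δ K ε : ℝ} (hf : ContinuousOn f (Icc a b))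
    (hf' : ∀ x ∈ Ioc a b, ∀ r < f' x, ∃ᶠ z in 𝓝[<] x, r < (x - z)⁻¹ * (f x - f z))
    (hb : f b ≤ δ) (bound : ∀ x ∈ Ioc a b, -f' x ≤ K * f x + ε) :
    ∀ x ∈ Icc a b, f x ≤ gronwallBound δ K ε (b - x) := by
  intro x hx
  have reversed := le_gronwallBound_of_liminf_deriv_right_le (f := fun t => f (-t))
    (f' := fun t => -f' (-t)) (a := -b) (b := -a) (δ := δ) (K := K) (ε := ε)
    (hf.comp continuous_neg.continuousOn fun t ht => ⟨le_neg.1 ht.2, neg_le.1 ht.1⟩) ?_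
    (by simpa only [neg_neg] using hb) (fun t ht => bound _ ⟨lt_neg.1 ht.2, neg_le.1 ht.1⟩)
    (-x) ⟨neg_le_neg hx.2, neg_le_neg hx.1⟩
  · simpa only [neg_neg, neg_sub_neg] using reversed
  · intro t ht r hr
    have left := hf' (-t) ⟨lt_neg.1 ht.2, neg_le.1 ht.1⟩ (-r) (neg_lt.1 hr)
    have neg_tendsto : Tendsto (fun z : ℝ => -z) (𝓝[<] (-t)) (𝓝[>] t) := by
      simpa only [neg_neg] using tendsto_neg_nhdsLT (a := -t)
    refine neg_tendsto.frequently (left.mono fun z hz => ?_)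
    rw [neg_neg, ← neg_lt_neg_iff]
    convert hz using 1
    ring

theorem lipschitzOnWith_of_abs_sub_le {L : ℝ} {s : Set ℝ}
    (h : ∀ a ∈ s, ∀ b ∈ s, a ≤ b → |f b - f a| ≤ L * (b - a)) :
    LipschitzOnWith L.toNNReal f s := by
  refine LipschitzOnWith.of_dist_le_mul fun x hx y hy => ?_
  wlog hxy : x ≤ y generalizing x y
  · rw [dist_comm, dist_comm x]
    exact this y hy x hx (le_of_not_ge hxy)
  rw [dist_comm, dist_comm x, Real.dist_eq, Real.dist_eq, abs_of_nonneg (sub_nonneg.2 hxy)]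
  exact (h x hx y hy hxy).trans
    (mul_le_mul_of_nonneg_right L.le_coe_toNNReal (sub_nonneg.2 hxy))

theorem deriv_le_of_eventually_sub_le {t q : ℝ} (hd : DifferentiableAt ℝ f t)
    (h : ∀ r > q, ∀ᶠ z in 𝓝[>] t, f z - f t ≤ r * (z - t)) : deriv f t ≤ q := by
  refine le_of_forall_gt_imp_ge_of_dense fun r hr =>
    le_of_tendsto (hasDerivAt_iff_tendsto_slope_left_right.1 hd.hasDerivAt).2 ?_
  filter_upwards [h r hr, self_mem_nhdsWithin] with z hz htz
  rwa [slope_def_field, div_le_iff₀ (sub_pos.2 htz)]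

theorem le_deriv_of_eventually_le_sub {t q : ℝ} (hd : DifferentiableAt ℝ f t)
    (h : ∀ r < q, ∀ᶠ z in 𝓝[<] t, r * (t - z) ≤ f t - f z) : q ≤ deriv f t := by
  refine le_of_forall_lt_imp_le_of_dense fun r hr =>
    ge_of_tendsto (hasDerivAt_iff_tendsto_slope_left_right.1 hd.hasDerivAt).1 ?_
  filter_upwards [h r hr, self_mem_nhdsWithin] with z hz hzt
  rwa [slope_comm, slope_def_field, le_div_iff₀ (sub_pos.2 hzt)]

theorem ae_differentiableAt_of_lipschitzOnWith {K : NNReal}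
    (hf : LipschitzOnWith K f (Icc a b)) :
    ∀ᵐ t ∂volume.restrict (Ioo a b), DifferentiableAt ℝ f t := by
  rw [ae_restrict_iff' measurableSet_Ioo]
  filter_upwards [hf.ae_differentiableWithinAt_of_mem_real] with t ht htI
  exact (ht (Ioo_subset_Icc_self htI)).differentiableAt (Icc_mem_nhds htI.1 htI.2)

theorem ae_continuousWithinAt_of_monotoneOn (hf : MonotoneOn f (Icc a b)) :
    ∀ᵐ t ∂volume.restrict (Ioo a b), ContinuousWithinAt f (Icc a b) t := by
  rw [ae_restrict_iff' measurableSet_Ioo]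
  filter_upwards [hf.countable_not_continuousWithinAt.ae_notMem volume] with t ht htI
  by_contra hc
  exact ht ⟨Ioo_subset_Icc_self htI, hc⟩

theorem sub_eq_integral_of_deriv_eq_of_le_deriv (hab : a ≤ b)
    (hG : AbsolutelyContinuousOnInterval G a b) (hH : AbsolutelyContinuousOnInterval H a b)
    (hGH : G b - G a ≤ H b - H a) (hHp : ∀ᵐ t ∂volume.restrict (Ioo a b), deriv H t = p t)
    (hpG : ∀ᵐ t ∂volume.restrict (Ioo a b), p t ≤ deriv G t) :
    G b - G a = ∫ t in a..b, p t := by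
  rw [restrict_Ioo_eq_restrict_Ioc] at hHp hpG
  have integral_eq : ∫ t in a..b, deriv H t = ∫ t in a..b, p t :=
    intervalIntegral.integral_congr_ae_restrict (by rwa [uIoc_of_le hab])
  refine le_antisymm ?_ ?_
  · calc G b - G a ≤ H b - H a := hGH
      _ = ∫ t in a..b, p t := by rw [← hH.integral_deriv_eq_sub, integral_eq]
  · calc ∫ t in a..b, p t = ∫ t in a..b, deriv H t := integral_eq.symm
      _ ≤ ∫ t in a..b, deriv G t := by
        refine intervalIntegral.integral_mono_ae_restrict hab hH.intervalIntegrable_deriv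
          hG.intervalIntegrable_deriv ?_
        rw [Measure.restrict_congr_set Ioc_ae_eq_Icc.symm]
        filter_upwards [hHp, hpG] with t h₁ h₂ using h₁.trans_le h₂
      _ = G b - G a := hG.integral_deriv_eq_sub

end RealAnalysis

variable {E P : ℝ → X → ℝ} {T CP B : ℝ} {x₀ : X}

section LowerSemicontinuity

variable {t : ℝ} {v : X}

-- Closedness of the sublevels of `E + dist x₀` suffices: the continuous term `dist x₀` splits off.
theorem CondE1.eventually_lt_energy (h : CondE1 E T x₀) {ι : Type*} {l : Filter ι} {s : ι → ℝ}
    {w : ι → X} {y : ℝ} (hs : ∀ᶠ i in l, s i ∈ Icc 0 T) (hst : Tendsto s l (𝓝 t))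
    (hw : Tendsto w l (𝓝 v)) (hy : y < E t v) : ∀ᶠ i in l, y < E (s i) (w i) := by
  obtain ⟨y', hyy', hy'⟩ := exists_between hy
  have not_mem_sublevel : (t, v) ∈
      {p : ℝ × X | p.1 ∈ Icc 0 T ∧ E p.1 p.2 + dist x₀ p.2 ≤ y' + dist x₀ v}ᶜ :=
    fun hmem => hy'.not_ge (le_of_add_le_add_right hmem.2)
  have dist_lt : ∀ᶠ i in l, dist x₀ (w i) < dist x₀ v + (y' - y) :=
    (tendsto_const_nhds.dist hw).eventually_lt_const (lt_add_of_pos_right _ (sub_pos.2 hyy'))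
  filter_upwards [hs, dist_lt, (hst.prodMk_nhds hw).eventually
    ((h _).2.isClosed.isOpen_compl.mem_nhds not_mem_sublevel)] with i hsi hdist hnot
  have := not_le.1 fun hle => hnot ⟨hsi, hle⟩
  linarith

theorem CondE1.lowerSemicontinuous_energy (h : CondE1 E T x₀) (ht : t ∈ Icc 0 T) :
    LowerSemicontinuous (E t) := fun _ _ hy =>
  h.eventually_lt_energy (Eventually.of_forall fun _ => ht) tendsto_const_nhds tendsto_id hy

theorem CondE1.isCompact_sublevel (h : CondE1 E T x₀) (ht : t ∈ Icc 0 T) (C : ℝ) :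
    IsCompact {w : X | E t w + dist x₀ w ≤ C} := by
  have slice : {w : X | E t w + dist x₀ w ≤ C} = Prod.mk t ⁻¹'
      {p : ℝ × X | p.1 ∈ Icc 0 T ∧ E p.1 p.2 + dist x₀ p.2 ≤ C} := by
    ext w
    exact ⟨fun hw => ⟨ht, hw⟩, fun hw => hw.2⟩
  have left_inverse : Function.LeftInverse Prod.snd (Prod.mk t : X → ℝ × X) := fun _ => rfl
  rw [slice]
  exact (left_inverse.isClosedEmbedding continuous_snd (by fun_prop)).isCompact_preimage (h C).2

theorem CondE1.exists_isMinOn_energy_add_dist (h : CondE1 E T x₀) (ht : t ∈ Icc 0 T) (v : X) :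
    ∃ w, ∀ w', E t w + dist v w ≤ E t w' + dist v w' := by
  have lsc : LowerSemicontinuous fun w => E t w + dist v w :=
    (h.lowerSemicontinuous_energy ht).add (continuous_const.dist continuous_id).lowerSemicontinuous
  obtain ⟨w, -, hmin⟩ := (lsc.lowerSemicontinuousOn _).exists_isMinOn
    ⟨v, (le_rfl : E t v + dist x₀ v ≤ _)⟩ (h.isCompact_sublevel ht (E t v + dist x₀ v))
  refine ⟨w, fun w' => ?_⟩
  by_cases hw' : E t w' + dist x₀ w' ≤ E t v + dist x₀ v
  · exact hmin hw'
  · have hwv : E t w + dist v w ≤ E t v + dist v v := hmin (le_rfl : E t v + dist x₀ v ≤ _)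
    rw [dist_self] at hwv
    linarith [dist_triangle x₀ v w']

/-- The states whose perturbed energy `E r v + dist x₀ v` stays below `B` at all times of
`[0,T]`; on it the power is bounded and the energy is Lipschitz in time. -/
def uniformSublevel (E : ℝ → X → ℝ) (T : ℝ) (x₀ : X) (B : ℝ) : Set X :=
  {v | ∀ r ∈ Icc 0 T, E r v + dist x₀ v ≤ B}

theorem CondE1.isCompact_uniformSublevel (h : CondE1 E T x₀) (hT : 0 ≤ T) :
    IsCompact (uniformSublevel E T x₀ B) := by
  have h0 : (0 : ℝ) ∈ Icc 0 T := left_mem_Icc.2 hT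
  refine (h.isCompact_sublevel h0 B).of_isClosed_subset ?_ fun v hv => hv 0 h0
  have eq_iInter : uniformSublevel E T x₀ B = ⋂ r ∈ Icc 0 T, {v | E r v + dist x₀ v ≤ B} := by
    ext v
    simp only [uniformSublevel, mem_ofPred_eq, mem_iInter]
  rw [eq_iInter]
  exact isClosed_biInter fun r hr => (h.isCompact_sublevel hr B).isClosed

end LowerSemicontinuity

section PowerControl

variable {t a b : ℝ} {v : X}

theorem CondE2.energy_add_dist_nonneg (h : CondE2 E P T x₀ CP) (ht : t ∈ Icc 0 T) (v : X) :
    0 ≤ E t v + dist x₀ v :=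
  nonneg_of_mul_nonneg_right ((abs_nonneg _).trans (h.2 t ht v).2.2) h.1

theorem CondE2.eventually_energy_sub_lt (h : CondE2 E P T x₀ CP) (ht : t ∈ Icc 0 T) {r : ℝ}
    (hr : P t v < r) : ∀ᶠ z in 𝓝[Ioc t T] t, E z v - E t v < r * (z - t) := by
  have limsup_lt := (h.2 t ht v).2.1.trans_lt (EReal.coe_lt_coe_iff.2 hr)
  filter_upwards [eventually_lt_of_limsup_lt limsup_lt, self_mem_nhdsWithin] with z hz hzt
  exact (div_lt_iff₀ (sub_pos.2 hzt.1)).1 (EReal.coe_lt_coe_iff.1 hz)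

theorem CondE2.eventually_lt_energy_sub (h : CondE2 E P T x₀ CP) (ht : t ∈ Icc 0 T) {r : ℝ}
    (hr : r < P t v) : ∀ᶠ z in 𝓝[Ico 0 t] t, r * (t - z) < E t v - E z v := by
  have lt_liminf := (EReal.coe_lt_coe_iff.2 hr).trans_le (h.2 t ht v).1
  filter_upwards [eventually_lt_of_lt_liminf lt_liminf, self_mem_nhdsWithin] with z hz hzt
  exact (lt_div_iff₀ (sub_pos.2 hzt.2)).1 (EReal.coe_lt_coe_iff.1 hz)

theorem CondE2.eventually_energy_le (h : CondE2 E P T x₀ CP) (ht : t ∈ Icc 0 T) (v : X) :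
    ∀ᶠ z in 𝓝[Icc 0 T] t, E z v ≤ E t v + (|P t v| + 1) * |z - t| := by
  have Icc_subset : Icc 0 T ⊆ insert t (Ico 0 t ∪ Ioc t T) := fun z hz => by
    rcases lt_trichotomy z t with hzt | rfl | hzt
    · exact Or.inr (Or.inl ⟨hz.1, hzt⟩)
    · exact Or.inl rfl
    · exact Or.inr (Or.inr ⟨hzt, hz.2⟩)
  refine Eventually.filter_mono (nhdsWithin_mono t Icc_subset) ?_
  rw [nhdsWithin_insert, nhdsWithin_union, eventually_sup, eventually_sup, eventually_pure]
  refine ⟨by simp only [sub_self, abs_zero, mul_zero, add_zero, le_refl], ?_, ?_⟩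
  · have power_gt : -(|P t v| + 1) < P t v := by linarith [neg_abs_le (P t v)]
    filter_upwards [h.eventually_lt_energy_sub ht power_gt, self_mem_nhdsWithin] with z hz hzt
    rw [abs_sub_comm, abs_of_pos (sub_pos.2 hzt.2)]
    linarith
  · have power_lt : P t v < |P t v| + 1 := by linarith [le_abs_self (P t v)]
    filter_upwards [h.eventually_energy_sub_lt ht power_lt, self_mem_nhdsWithin] with z hz hzt
    rw [abs_of_pos (sub_pos.2 hzt.1)]
    linarith

theorem CondE2.continuousOn_energy (h : CondE2 E P T x₀ CP) (hE1 : CondE1 E T x₀) (v : X) :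
    ContinuousOn (fun t => E t v) (Icc 0 T) := by
  intro t ht
  have tendsto_time : Tendsto id (𝓝[Icc 0 T] t) (𝓝 t) := nhdsWithin_le_nhds
  refine tendsto_order.2 ⟨fun y hy => hE1.eventually_lt_energy self_mem_nhdsWithin tendsto_time
    tendsto_const_nhds hy, fun y hy => ?_⟩
  have upper_tendsto : Tendsto (fun z => E t v + (|P t v| + 1) * |z - t|) (𝓝[Icc 0 T] t)
      (𝓝 (E t v)) := by
    have : Continuous fun z => E t v + (|P t v| + 1) * |z - t| := by fun_prop
    simpa only [sub_self, abs_zero, mul_zero, add_zero] using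
      (this.tendsto t).mono_left nhdsWithin_le_nhds
  filter_upwards [h.eventually_energy_le ht v, upper_tendsto.eventually_lt_const hy] with z h₁ h₂
  exact h₁.trans_lt h₂

theorem CondE2.energy_add_le_gronwallBound (h : CondE2 E P T x₀ CP) (hE1 : CondE1 E T x₀)
    (ha : 0 ≤ a) (hab : a ≤ b) (hb : b ≤ T) {c K ε : ℝ}
    (hP : ∀ r ∈ Ico a b, P r v ≤ K * (E r v + c) + ε) :
    E b v + c ≤ gronwallBound (E a v + c) K ε (b - a) := by
  refine le_gronwallBound_of_liminf_deriv_right_le (f := fun t => E t v + c)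
    (f' := fun t => P t v) (((h.continuousOn_energy hE1 v).mono (Icc_subset_Icc ha hb)).add
      continuousOn_const) (fun x hx r hr => Eventually.frequently ?_) le_rfl hP b ⟨hab, le_rfl⟩
  have slope_lt := h.eventually_energy_sub_lt ⟨ha.trans hx.1, hx.2.le.trans hb⟩ hr
  rw [nhdsWithin_Ioc_eq_nhdsGT (hx.2.trans_le hb)] at slope_lt
  filter_upwards [slope_lt, self_mem_nhdsWithin] with z hz hxz
  rwa [inv_mul_lt_iff₀ (sub_pos.2 hxz), add_sub_add_right_eq_sub, mul_comm]

theorem CondE2.energy_add_le_gronwallBound_backward (h : CondE2 E P T x₀ CP)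
    (hE1 : CondE1 E T x₀) (ha : 0 ≤ a) (hab : a ≤ b) (hb : b ≤ T) {c K ε : ℝ}
    (hP : ∀ r ∈ Ioc a b, -P r v ≤ K * (E r v + c) + ε) :
    E a v + c ≤ gronwallBound (E b v + c) K ε (b - a) := by
  refine le_gronwallBound_of_liminf_deriv_left_ge (f := fun t => E t v + c)
    (f' := fun t => P t v) (((h.continuousOn_energy hE1 v).mono (Icc_subset_Icc ha hb)).add
      continuousOn_const) (fun x hx r hr => Eventually.frequently ?_) le_rfl hP a ⟨le_rfl, hab⟩
  have lt_slope := h.eventually_lt_energy_sub ⟨ha.trans hx.1.le, hx.2.trans hb⟩ hr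
  rw [nhdsWithin_Ico_eq_nhdsLT (ha.trans_lt hx.1)] at lt_slope
  filter_upwards [lt_slope, self_mem_nhdsWithin] with z hz hzx
  rwa [lt_inv_mul_iff₀ (sub_pos.2 hzx), add_sub_add_right_eq_sub, mul_comm]

theorem CondE2.energy_add_dist_le_exp (h : CondE2 E P T x₀ CP) (hE1 : CondE1 E T x₀)
    (ha : a ∈ Icc 0 T) (hb : b ∈ Icc 0 T) (v : X) :
    E b v + dist x₀ v ≤ (E a v + dist x₀ v) * Real.exp (CP * |b - a|) := by
  rw [← gronwallBound_ε0]
  rcases le_total a b with hab | hba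
  · rw [abs_of_nonneg (sub_nonneg.2 hab)]
    refine h.energy_add_le_gronwallBound hE1 ha.1 hab hb.2 fun r hr => ?_
    rw [add_zero]
    exact (le_abs_self _).trans (h.2 r ⟨ha.1.trans hr.1, hr.2.le.trans hb.2⟩ v).2.2
  · rw [abs_sub_comm, abs_of_nonneg (sub_nonneg.2 hba)]
    refine h.energy_add_le_gronwallBound_backward hE1 hb.1 hba ha.2 fun r hr => ?_
    rw [add_zero]
    exact (neg_le_abs _).trans (h.2 r ⟨hb.1.trans hr.1.le, hr.2.trans ha.2⟩ v).2.2

theorem CondE2.energy_sub_le_mul (h : CondE2 E P T x₀ CP) (hE1 : CondE1 E T x₀) (ha : 0 ≤ a)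
    (hab : a ≤ b) (hb : b ≤ T) {M : ℝ} (hP : ∀ r ∈ Ico a b, P r v ≤ M) :
    E b v - E a v ≤ M * (b - a) := by
  have := h.energy_add_le_gronwallBound hE1 ha hab hb (v := v) (c := 0) (K := 0) (ε := M)
    (by simpa only [zero_mul, zero_add] using hP)
  rw [gronwallBound_K0] at this
  linarith

theorem CondE2.energy_sub_le_mul_backward (h : CondE2 E P T x₀ CP) (hE1 : CondE1 E T x₀)
    (ha : 0 ≤ a) (hab : a ≤ b) (hb : b ≤ T) {M : ℝ} (hP : ∀ r ∈ Ioc a b, -P r v ≤ M) :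
    E a v - E b v ≤ M * (b - a) := by
  have := h.energy_add_le_gronwallBound_backward hE1 ha hab hb (v := v) (c := 0) (K := 0) (ε := M)
    (by simpa only [zero_mul, zero_add] using hP)
  rw [gronwallBound_K0] at this
  linarith

theorem CondE2.abs_power_le (h : CondE2 E P T x₀ CP) (hv : v ∈ uniformSublevel E T x₀ B)
    (ht : t ∈ Icc 0 T) : |P t v| ≤ CP * B :=
  (h.2 t ht v).2.2.trans (mul_le_mul_of_nonneg_left (hv t ht) h.1.le)

theorem CondE2.abs_energy_sub_le (h : CondE2 E P T x₀ CP) (hE1 : CondE1 E T x₀)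
    (hv : v ∈ uniformSublevel E T x₀ B) (ha : a ∈ Icc 0 T) (hb : b ∈ Icc 0 T) :
    |E b v - E a v| ≤ CP * B * |b - a| := by
  wlog hab : a ≤ b generalizing a b
  · rw [abs_sub_comm, abs_sub_comm b]
    exact this hb ha (le_of_not_ge hab)
  rw [abs_of_nonneg (sub_nonneg.2 hab), abs_sub_le_iff]
  exact ⟨h.energy_sub_le_mul hE1 ha.1 hab hb.2 fun r hr => (le_abs_self _).trans
      (h.abs_power_le hv ⟨ha.1.trans hr.1, hr.2.le.trans hb.2⟩),
    h.energy_sub_le_mul_backward hE1 ha.1 hab hb.2 fun r hr => (neg_le_abs _).trans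
      (h.abs_power_le hv ⟨ha.1.trans hr.1.le, hr.2.trans hb.2⟩)⟩

end PowerControl

section Stability

variable {t : ℝ} {v : X} {ι : Type*} {l : Filter ι} {s : ι → ℝ} {w : ι → X}

/-- Global stability of the state `v` at time `t`, the pointwise form of condition (S_d). -/
def IsStable (E : ℝ → X → ℝ) (t : ℝ) (v : X) : Prop :=
  ∀ w, E t v ≤ E t w + dist v w

theorem CondE2.tendsto_energy_add_dist (h : CondE2 E P T x₀ CP) (hE1 : CondE1 E T x₀)
    (ht : t ∈ Icc 0 T) (hs : ∀ᶠ i in l, s i ∈ Icc 0 T) (hst : Tendsto s l (𝓝 t))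
    (hw : Tendsto w l (𝓝 v)) (z : X) :
    Tendsto (fun i => E (s i) z + dist (w i) z) l (𝓝 (E t z + dist v z)) :=
  ((h.continuousOn_energy hE1 z t ht).tendsto.comp (tendsto_nhdsWithin_iff.2 ⟨hst, hs⟩)).add
    (hw.dist tendsto_const_nhds)

theorem isStable_of_tendsto [l.NeBot] (hE1 : CondE1 E T x₀) (hE2 : CondE2 E P T x₀ CP)
    (ht : t ∈ Icc 0 T) (hs : ∀ᶠ i in l, s i ∈ Icc 0 T) (hstable : ∀ᶠ i in l, IsStable E (s i) (w i))
    (hst : Tendsto s l (𝓝 t)) (hw : Tendsto w l (𝓝 v)) : IsStable E t v := fun z => by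
  refine le_of_forall_lt_imp_le_of_dense fun y hy =>
    ge_of_tendsto (hE2.tendsto_energy_add_dist hE1 ht hs hst hw z) ?_
  filter_upwards [hE1.eventually_lt_energy hs hst hw hy, hstable] with i hyi hi
  exact hyi.le.trans (hi z)

theorem tendsto_energy_of_isStable (hE1 : CondE1 E T x₀) (hE2 : CondE2 E P T x₀ CP)
    (ht : t ∈ Icc 0 T) (hs : ∀ᶠ i in l, s i ∈ Icc 0 T) (hstable : ∀ᶠ i in l, IsStable E (s i) (w i))
    (hst : Tendsto s l (𝓝 t)) (hw : Tendsto w l (𝓝 v)) :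
    Tendsto (fun i => E (s i) (w i)) l (𝓝 (E t v)) := by
  refine tendsto_order.2 ⟨fun y hy => hE1.eventually_lt_energy hs hst hw hy, fun y hy => ?_⟩
  have recovery := hE2.tendsto_energy_add_dist hE1 ht hs hst hw v
  rw [dist_self, add_zero] at recovery
  filter_upwards [recovery.eventually_lt_const hy, hstable] with i hyi hi
  exact (hi v).trans_lt hyi

-- The power is evaluated at the time `q.2.1`, possibly different from the time `q.1` of stability.
theorem CondE3.eventually_power_lt (h : CondE3 E P T) (hE1 : CondE1 E T x₀)
    (hE2 : CondE2 E P T x₀ CP) (ht : t ∈ Icc 0 T) {p : ℝ} (hp : P t v < p) (B : ℝ) :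
    ∀ᶠ q : ℝ × ℝ × X in 𝓝 (t, t, v), q.1 ∈ Icc 0 T → q.2.1 ∈ Icc 0 T →
      q.2.2 ∈ uniformSublevel E T x₀ B → IsStable E q.1 q.2.2 → P q.2.1 q.2.2 < p := by
  by_contra hcon
  obtain ⟨q, hq, hbad⟩ := exists_seq_forall_of_frequently (not_eventually.1 hcon)
  push Not at hbad
  choose hs hr hsub hstable hpow using hbad
  obtain ⟨hst, hrt, hwv⟩ : Tendsto (fun n => (q n).1) atTop (𝓝 t) ∧
      Tendsto (fun n => (q n).2.1) atTop (𝓝 t) ∧ Tendsto (fun n => (q n).2.2) atTop (𝓝 v) := by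
    rw [nhds_prod_eq, nhds_prod_eq] at hq
    exact ⟨hq.fst, hq.snd.fst, hq.snd.snd⟩
  have energy_tendsto := tendsto_energy_of_isStable hE1 hE2 ht (Eventually.of_forall hs)
    (Eventually.of_forall hstable) hst hwv
  have diff_tendsto_zero :
      Tendsto (fun n => E (q n).2.1 (q n).2.2 - E (q n).1 (q n).2.2) atTop (𝓝 0) := by
    refine squeeze_zero_norm
      (fun n => hE2.abs_energy_sub_le hE1 (hsub n) (hs n) (hr n)) ?_
    simpa only [sub_self, abs_zero, mul_zero] using ((hrt.sub hst).abs).const_mul (CP * B)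
  have power_limsup_le := h _ _ t v hr ht hrt hwv
    (by simpa only [sub_add_cancel, zero_add] using diff_tendsto_zero.add energy_tendsto)
  have le_limsup : (p : EReal) ≤ limsup (fun n => (P (q n).2.1 (q n).2.2 : EReal)) atTop :=
    le_limsup_of_frequently_le (Frequently.of_forall fun n => EReal.coe_le_coe_iff.2 (hpow n))
  exact hp.not_ge (EReal.coe_le_coe_iff.1 (le_limsup.trans power_limsup_le))

end Stability

section MinimizingMovements

variable {s : ℕ → ℝ} {U : ℕ → X}

/-- `s` lists, in increasing order and possibly with repetitions, instants of `[0,T]` starting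
from the initial time `0`. -/
structure IsTimePartition (T : ℝ) (s : ℕ → ℝ) : Prop where
  mem_Icc : ∀ k, s k ∈ Icc 0 T
  mono : Monotone s
  zero : s 0 = 0

/-- `U` solves the incremental minimization scheme along the time partition `s`: each `U (k + 1)`
minimizes `E (s (k + 1)) + dist (U k)`. -/
structure IsMinimizingMovement (E : ℝ → X → ℝ) (T : ℝ) (s : ℕ → ℝ) (U : ℕ → X) : Prop
    extends IsTimePartition T s where
  isMin : ∀ k w, E (s (k + 1)) (U (k + 1)) + dist (U k) (U (k + 1)) ≤
    E (s (k + 1)) w + dist (U k) w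

theorem IsTimePartition.exists_isMinimizingMovement (hs : IsTimePartition T s)
    (hE1 : CondE1 E T x₀) (u₀ : X) : ∃ U, U 0 = u₀ ∧ IsMinimizingMovement E T s U := by
  choose next hnext using fun k v => hE1.exists_isMinOn_energy_add_dist (hs.mem_Icc k) v
  exact ⟨fun k => Nat.rec u₀ (fun k v => next (k + 1) v) k, rfl, hs, fun k w => hnext _ _ _⟩

theorem IsMinimizingMovement.isStable (hU : IsMinimizingMovement E T s U)
    (h0 : IsStable E 0 (U 0)) : ∀ k, IsStable E (s k) (U k)
  | 0 => hU.zero ▸ h0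
  | k + 1 => fun w => by linarith [hU.isMin k w, dist_triangle (U k) (U (k + 1)) w]

theorem IsMinimizingMovement.energy_add_dist_succ_le (hU : IsMinimizingMovement E T s U) (k : ℕ) :
    E (s (k + 1)) (U (k + 1)) + dist (U k) (U (k + 1)) ≤ E (s (k + 1)) (U k) := by
  simpa only [dist_self, add_zero] using hU.isMin k (U k)

theorem IsMinimizingMovement.energy_add_dist_le_exp (hU : IsMinimizingMovement E T s U)
    (hE1 : CondE1 E T x₀) (hE2 : CondE2 E P T x₀ CP) (k : ℕ) :
    E (s k) (U k) + dist x₀ (U k) ≤ (E 0 (U 0) + dist x₀ (U 0)) * Real.exp (CP * s k) := by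
  induction k with
  | zero => rw [hU.zero, mul_zero, Real.exp_zero, mul_one]
  | succ k ih =>
    have growth := hE2.energy_add_dist_le_exp hE1 (hU.mem_Icc k) (hU.mem_Icc (k + 1)) (U k)
    rw [abs_of_nonneg (sub_nonneg.2 (hU.mono k.le_succ))] at growth
    calc E (s (k + 1)) (U (k + 1)) + dist x₀ (U (k + 1))
        ≤ E (s (k + 1)) (U k) + dist x₀ (U k) := by
          linarith [hU.energy_add_dist_succ_le k, dist_triangle x₀ (U k) (U (k + 1))]
      _ ≤ (E (s k) (U k) + dist x₀ (U k)) * Real.exp (CP * (s (k + 1) - s k)) := growth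
      _ ≤ (E 0 (U 0) + dist x₀ (U 0)) * Real.exp (CP * s k) * Real.exp (CP * (s (k + 1) - s k)) :=
          mul_le_mul_of_nonneg_right ih (Real.exp_pos _).le
      _ = (E 0 (U 0) + dist x₀ (U 0)) * Real.exp (CP * s (k + 1)) := by
          rw [mul_assoc, ← Real.exp_add]
          ring_nf

theorem IsMinimizingMovement.mem_uniformSublevel (hU : IsMinimizingMovement E T s U)
    (hE1 : CondE1 E T x₀) (hE2 : CondE2 E P T x₀ CP) (k : ℕ) : U k ∈ uniformSublevel E T x₀
      ((E 0 (U 0) + dist x₀ (U 0)) * Real.exp (CP * T) * Real.exp (CP * T)) := fun r hr => by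
  have h0 : (0 : ℝ) ∈ Icc 0 T := left_mem_Icc.2 (hr.1.trans hr.2)
  have nonneg₀ := hE2.energy_add_dist_nonneg h0 (U 0)
  have CP_pos := hE2.1
  calc E r (U k) + dist x₀ (U k)
      ≤ (E (s k) (U k) + dist x₀ (U k)) * Real.exp (CP * |r - s k|) :=
        hE2.energy_add_dist_le_exp hE1 (hU.mem_Icc k) hr (U k)
    _ ≤ (E 0 (U 0) + dist x₀ (U 0)) * Real.exp (CP * s k) * Real.exp (CP * |r - s k|) := by
        gcongr
        exact hU.energy_add_dist_le_exp hE1 hE2 k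
    _ ≤ (E 0 (U 0) + dist x₀ (U 0)) * Real.exp (CP * T) * Real.exp (CP * T) := by
        gcongr
        · exact (hU.mem_Icc k).2
        · exact (abs_sub_le_of_nonneg_of_le hr.1 hr.2 (hU.mem_Icc k).1 (hU.mem_Icc k).2)

theorem IsMinimizingMovement.energy_add_variation_sub_le (hU : IsMinimizingMovement E T s U)
    {a b : ℕ} (hab : a ≤ b) {M : ℝ}
    (hM : ∀ j, a ≤ j → j < b → E (s (j + 1)) (U j) - E (s j) (U j) ≤ M * (s (j + 1) - s j)) :
    (E (s b) (U b) + discreteVariation U b) - (E (s a) (U a) + discreteVariation U a) ≤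
      M * (s b - s a) := by
  induction b, hab using Nat.le_induction with
  | base => simp only [sub_self, mul_zero, le_refl]
  | succ b hab ih =>
    have up_to_b := ih fun j haj hjb => hM j haj (hjb.trans b.lt_succ_self)
    have last_step := hM b hab b.lt_succ_self
    have min_step := hU.energy_add_dist_succ_le b
    have variation_succ : discreteVariation U (b + 1) =
        discreteVariation U b + dist (U b) (U (b + 1)) := Finset.sum_range_succ _ _
    linarith

theorem IsMinimizingMovement.energy_add_variation_sub_le_of_uniformSublevel
    (hU : IsMinimizingMovement E T s U) (hE1 : CondE1 E T x₀) (hE2 : CondE2 E P T x₀ CP)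
    (hB : ∀ k, U k ∈ uniformSublevel E T x₀ B) {a b : ℕ} (hab : a ≤ b) :
    (E (s b) (U b) + discreteVariation U b) - (E (s a) (U a) + discreteVariation U a) ≤
      CP * B * (s b - s a) := by
  refine hU.energy_add_variation_sub_le hab fun j _ _ => (le_abs_self _).trans ?_
  have lipschitz := hE2.abs_energy_sub_le hE1 (hB j) (hU.mem_Icc j) (hU.mem_Icc (j + 1))
  rwa [abs_of_nonneg (sub_nonneg.2 (hU.mono j.le_succ))] at lipschitz

theorem IsMinimizingMovement.discreteVariation_le (hU : IsMinimizingMovement E T s U)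
    (hE1 : CondE1 E T x₀) (hE2 : CondE2 E P T x₀ CP)
    (hB : ∀ k, U k ∈ uniformSublevel E T x₀ B) {R : ℝ} {k : ℕ} (hR : dist x₀ (U k) ≤ R) :
    discreteVariation U k ≤ E 0 (U 0) + CP * B * T + R := by
  have h0 : (0 : ℝ) ∈ Icc 0 T := hU.zero ▸ hU.mem_Icc 0
  have B_nonneg : 0 ≤ B := (hE2.energy_add_dist_nonneg h0 _).trans (hB 0 0 h0)
  have balance := hU.energy_add_variation_sub_le_of_uniformSublevel hE1 hE2 hB k.zero_le
  have time_le : CP * B * (s k - s 0) ≤ CP * B * T := by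
    have := (hU.mem_Icc k).2
    have := hE2.1
    rw [hU.zero, sub_zero]
    gcongr
  have variation_zero : discreteVariation U 0 = 0 := Finset.sum_range_zero _
  have energy_lower := hE2.energy_add_dist_nonneg (hU.mem_Icc k) (U k)
  rw [hU.zero, variation_zero] at balance
  rw [hU.zero] at time_le
  linarith

end MinimizingMovements

section PartitionSequences

/-- A sequence of time partitions of vanishing mesh: `κ n t` is the index of the node of the
`n`-th partition that represents the time `t`, chosen at or before `t`. -/
structure IsPartitionSequence (T : ℝ) (s : ℕ → ℕ → ℝ) (κ : ℕ → ℝ → ℕ) : Prop where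
  partition : ∀ n, IsTimePartition T (s n)
  index_mono : ∀ n, Monotone (κ n)
  index_zero : ∀ n, κ n 0 = 0
  node_le : ∀ n, ∀ t ∈ Icc 0 T, s n (κ n t) ≤ t
  tendsto_node : ∀ t ∈ Icc 0 T, Tendsto (fun n => s n (κ n t)) atTop (𝓝 t)

theorem exists_isPartitionSequence (hT : 0 ≤ T) : ∃ s κ, IsPartitionSequence T s κ := by
  have floor_div_le : ∀ n : ℕ, ∀ t ∈ Icc 0 T, (⌊t * (n + 1)⌋₊ : ℝ) / (n + 1) ≤ t :=
    fun n t ht => (div_le_iff₀ n.cast_add_one_pos).2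
      (Nat.floor_le (mul_nonneg ht.1 n.cast_add_one_pos.le))
  have node_eq : ∀ n : ℕ, ∀ t ∈ Icc 0 T, min ((⌊t * (n + 1)⌋₊ : ℝ) / (n + 1)) T =
      (⌊t * (n + 1)⌋₊ : ℝ) / (n + 1) :=
    fun n t ht => min_eq_left ((floor_div_le n t ht).trans ht.2)
  refine ⟨fun n k => min ((k : ℝ) / (n + 1)) T, fun n t => ⌊t * (n + 1)⌋₊,
    fun n => ⟨fun k => ⟨le_min (by positivity) hT, min_le_right _ _⟩, fun j k hjk => ?_, ?_⟩,
    fun n => ?_, fun n => ?_, fun n t ht => ?_, fun t ht => ?_⟩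
  · exact min_le_min_right T (by gcongr)
  · simp only [Nat.cast_zero, zero_div, min_eq_left hT]
  · exact fun a b hab => Nat.floor_le_floor
      (mul_le_mul_of_nonneg_right hab n.cast_add_one_pos.le)
  · simp only [zero_mul, Nat.floor_zero]
  · exact (node_eq n t ht).trans_le (floor_div_le n t ht)
  · have tendsto_succ : Tendsto (fun n : ℕ => (n : ℝ) + 1) atTop atTop :=
      tendsto_atTop_add_const_right _ _ tendsto_natCast_atTop_atTop
    exact ((tendsto_nat_floor_mul_div_atTop ht.1).comp tendsto_succ).congr
      fun n => (node_eq n t ht).symm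

end PartitionSequences

section MovementLimits

/-- `u` and `W` are the pointwise limits along `l` of minimizing movements `U n`, for partitions
of vanishing mesh, and of their discrete variations; all the movements start from stable states
and stay in the same uniform sublevel. -/
structure IsMovementLimit (E : ℝ → X → ℝ) (T : ℝ) (x₀ : X) (B : ℝ) (s : ℕ → ℕ → ℝ)
    (κ : ℕ → ℝ → ℕ) (U : ℕ → ℕ → X) (l : Filter ℕ) (u : ℝ → X) (W : ℝ → ℝ) : Prop where
  partitions : IsPartitionSequence T s κ
  movement : ∀ n, IsMinimizingMovement E T (s n) (U n)
  isStable_zero : ∀ n, IsStable E 0 (U n 0)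
  mem_uniformSublevel : ∀ n k, U n k ∈ uniformSublevel E T x₀ B
  le_atTop : l ≤ atTop
  tendsto_state : ∀ t ∈ Icc 0 T, Tendsto (fun n => U n (κ n t)) l (𝓝 (u t))
  tendsto_variation : ∀ t ∈ Icc 0 T,
    Tendsto (fun n => discreteVariation (U n) (κ n t)) l (𝓝 (W t))

variable {s : ℕ → ℕ → ℝ} {κ : ℕ → ℝ → ℕ} {U : ℕ → ℕ → X} {l : Filter ℕ} {u : ℝ → X}
  {W : ℝ → ℝ} {t a b : ℝ}

theorem IsMovementLimit.tendsto_node (h : IsMovementLimit E T x₀ B s κ U l u W)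
    (ht : t ∈ Icc 0 T) : Tendsto (fun n => s n (κ n t)) l (𝓝 t) :=
  (h.partitions.tendsto_node t ht).mono_left h.le_atTop

theorem IsMovementLimit.isStable [l.NeBot] (h : IsMovementLimit E T x₀ B s κ U l u W)
    (hE1 : CondE1 E T x₀) (hE2 : CondE2 E P T x₀ CP) (ht : t ∈ Icc 0 T) : IsStable E t (u t) :=
  isStable_of_tendsto hE1 hE2 ht (Eventually.of_forall fun n => (h.movement n).mem_Icc _)
    (Eventually.of_forall fun n => (h.movement n).isStable (h.isStable_zero n) _)
    (h.tendsto_node ht) (h.tendsto_state t ht)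

theorem IsMovementLimit.state_mem_uniformSublevel [l.NeBot]
    (h : IsMovementLimit E T x₀ B s κ U l u W) (hE1 : CondE1 E T x₀) (ht : t ∈ Icc 0 T) :
    u t ∈ uniformSublevel E T x₀ B :=
  (hE1.isCompact_uniformSublevel (ht.1.trans ht.2)).isClosed.mem_of_tendsto (h.tendsto_state t ht)
    (Eventually.of_forall fun n => h.mem_uniformSublevel n _)

theorem IsMovementLimit.isVariationMajorant [l.NeBot]
    (h : IsMovementLimit E T x₀ B s κ U l u W) : IsVariationMajorant u W (Icc 0 T) :=
  fun a ha b hb hab => le_of_tendsto_of_tendsto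
    ((h.tendsto_state a ha).dist (h.tendsto_state b hb))
    ((h.tendsto_variation b hb).sub (h.tendsto_variation a ha))
    (Eventually.of_forall fun n => isVariationMajorant_discreteVariation (U n) (mem_univ _)
      (mem_univ _) (h.partitions.index_mono n hab))

theorem IsMovementLimit.tendsto_energy_add_variation (h : IsMovementLimit E T x₀ B s κ U l u W)
    (hE1 : CondE1 E T x₀) (hE2 : CondE2 E P T x₀ CP) (ht : t ∈ Icc 0 T) :
    Tendsto (fun n => E (s n (κ n t)) (U n (κ n t)) + discreteVariation (U n) (κ n t)) l
      (𝓝 (E t (u t) + W t)) :=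
  (tendsto_energy_of_isStable hE1 hE2 ht (Eventually.of_forall fun n => (h.movement n).mem_Icc _)
    (Eventually.of_forall fun n => (h.movement n).isStable (h.isStable_zero n) _)
    (h.tendsto_node ht) (h.tendsto_state t ht)).add (h.tendsto_variation t ht)

theorem IsMovementLimit.energy_add_variation_sub_le_of_eventually [l.NeBot]
    (h : IsMovementLimit E T x₀ B s κ U l u W) (hE1 : CondE1 E T x₀)
    (hE2 : CondE2 E P T x₀ CP) (ha : a ∈ Icc 0 T) (hb : b ∈ Icc 0 T) {M : ℝ}
    (hM : ∀ᶠ n in l, (E (s n (κ n b)) (U n (κ n b)) + discreteVariation (U n) (κ n b)) -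
      (E (s n (κ n a)) (U n (κ n a)) + discreteVariation (U n) (κ n a)) ≤
        M * (s n (κ n b) - s n (κ n a))) :
    (E b (u b) + W b) - (E a (u a) + W a) ≤ M * (b - a) :=
  le_of_tendsto_of_tendsto ((h.tendsto_energy_add_variation hE1 hE2 hb).sub
    (h.tendsto_energy_add_variation hE1 hE2 ha))
    (((h.tendsto_node hb).sub (h.tendsto_node ha)).const_mul M) hM

theorem IsMovementLimit.energy_add_variation_sub_le [l.NeBot]
    (h : IsMovementLimit E T x₀ B s κ U l u W) (hE1 : CondE1 E T x₀)
    (hE2 : CondE2 E P T x₀ CP) (ha : a ∈ Icc 0 T) (hb : b ∈ Icc 0 T) (hab : a ≤ b) :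
    (E b (u b) + W b) - (E a (u a) + W a) ≤ CP * B * (b - a) :=
  h.energy_add_variation_sub_le_of_eventually hE1 hE2 ha hb (Eventually.of_forall fun n =>
    (h.movement n).energy_add_variation_sub_le_of_uniformSublevel hE1 hE2
      (h.mem_uniformSublevel n) (h.partitions.index_mono n hab))

-- A discrete trajectory can leave `u a` only at the cost of variation, which is small on `[a, b]`.
theorem IsMovementLimit.eventually_forall_near (h : IsMovementLimit E T x₀ B s κ U l u W)
    (ha : a ∈ Icc 0 T) (hb : b ∈ Icc 0 T) (hab : a ≤ b) {δ : ℝ} (hδ : b < a + δ)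
    (hW : W b - W a < δ / 2) : ∀ᶠ n in l, ∀ j, κ n a ≤ j → j < κ n b →
      dist (U n j) (u a) < δ ∧ a - δ < s n j ∧ s n (j + 1) < a + δ := by
  have δ_pos : 0 < δ := by linarith
  filter_upwards [Metric.tendsto_nhds.1 (h.tendsto_state a ha) _ (half_pos δ_pos),
    ((h.tendsto_variation b hb).sub (h.tendsto_variation a ha)).eventually_lt_const hW,
    (h.tendsto_node ha).eventually_const_lt (sub_lt_self a δ_pos)] with n state_near var_lt node_gt
    j haj hjb
  have from_a := isVariationMajorant_discreteVariation (U n) (mem_univ _) (mem_univ _) haj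
  have to_b := (isVariationMajorant_discreteVariation (U n)).monotoneOn (mem_univ _) (mem_univ _)
    hjb.le
  refine ⟨?_, node_gt.trans_le ((h.movement n).mono haj), ?_⟩
  · linarith [dist_triangle_left (U n j) (u a) (U n (κ n a))]
  · exact ((h.movement n).mono (Nat.succ_le_of_lt hjb)).trans_lt
      ((h.partitions.node_le n b hb).trans_lt hδ)

theorem IsMovementLimit.energy_add_variation_sub_le_of_power_lt [l.NeBot]
    (h : IsMovementLimit E T x₀ B s κ U l u W) (hE1 : CondE1 E T x₀)
    (hE2 : CondE2 E P T x₀ CP) (ha : a ∈ Icc 0 T) (hb : b ∈ Icc 0 T) (hab : a ≤ b) {r δ : ℝ}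
    (hP : ∀ q ∈ Metric.ball (a, a, u a) δ, q.1 ∈ Icc 0 T → q.2.1 ∈ Icc 0 T →
      q.2.2 ∈ uniformSublevel E T x₀ B → IsStable E q.1 q.2.2 → P q.2.1 q.2.2 < r)
    (hδ : b < a + δ) (hW : W b - W a < δ / 2) :
    (E b (u b) + W b) - (E a (u a) + W a) ≤ r * (b - a) := by
  refine h.energy_add_variation_sub_le_of_eventually hE1 hE2 ha hb ?_
  filter_upwards [h.eventually_forall_near ha hb hab hδ hW] with n near
  have hU := h.movement n
  refine hU.energy_add_variation_sub_le (h.partitions.index_mono n hab) fun j haj hjb => ?_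
  obtain ⟨state_near, node_gt, next_lt⟩ := near j haj hjb
  have node_le_next := hU.mono j.le_succ
  refine hE2.energy_sub_le_mul hE1 (hU.mem_Icc j).1 node_le_next (hU.mem_Icc (j + 1)).2
    fun τ hτ => (hP (s n j, τ, U n j) ?_ (hU.mem_Icc j)
      ⟨(hU.mem_Icc j).1.trans hτ.1, hτ.2.le.trans (hU.mem_Icc (j + 1)).2⟩
      (h.mem_uniformSublevel n j) (hU.isStable (h.isStable_zero n) j)).le
  rw [Metric.mem_ball, Prod.dist_eq, Prod.dist_eq, max_lt_iff, max_lt_iff, Real.dist_eq,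
    Real.dist_eq, abs_sub_lt_iff, abs_sub_lt_iff]
  dsimp only at node_le_next ⊢
  refine ⟨⟨?_, ?_⟩, ⟨?_, ?_⟩, state_near⟩ <;> linarith [hτ.1, hτ.2]

theorem IsMovementLimit.eventually_energy_add_variation_sub_le [l.NeBot]
    (h : IsMovementLimit E T x₀ B s κ U l u W) (hE1 : CondE1 E T x₀)
    (hE2 : CondE2 E P T x₀ CP) (hE3 : CondE3 E P T) (ht : t ∈ Ico 0 T)
    (hW : ContinuousWithinAt W (Icc 0 T) t) {r : ℝ} (hr : P t (u t) < r) :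
    ∀ᶠ b in 𝓝[>] t, (E b (u b) + W b) - (E t (u t) + W t) ≤ r * (b - t) := by
  have htT := Ico_subset_Icc_self ht
  obtain ⟨δ, δ_pos, hδ⟩ := Metric.eventually_nhds_iff_ball.1
    (hE3.eventually_power_lt hE1 hE2 htT hr B)
  have Icc_mem : Icc 0 T ∈ 𝓝[>] t := mem_of_superset (Ioc_mem_nhdsGT ht.2)
    fun b hb => ⟨ht.1.trans hb.1.le, hb.2⟩
  have W_near : ∀ᶠ b in 𝓝[>] t, W b < W t + δ / 2 :=
    (hW.tendsto.mono_left (nhdsWithin_le_iff.2 Icc_mem)).eventually_lt_const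
      (lt_add_of_pos_right _ (half_pos δ_pos))
  filter_upwards [W_near, Icc_mem, Ioo_mem_nhdsGT (lt_add_of_pos_right t δ_pos)] with b hWb hb hbδ
  exact h.energy_add_variation_sub_le_of_power_lt hE1 hE2 htT hb hbδ.1.le hδ hbδ.2
    (sub_lt_iff_lt_add'.2 hWb)

theorem exists_tendsto_of_isCompact {ι Y : Type*} [TopologicalSpace Y] {K : Set Y}
    (hK : IsCompact K) (l : Ultrafilter ι) {f : ι → Y} (hf : ∀ i, f i ∈ K) :
    ∃ y, Tendsto f l (𝓝 y) := by
  obtain ⟨y, -, hy⟩ := hK.ultrafilter_le_nhds' (l.map f)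
    (Ultrafilter.mem_map.2 (univ_mem' hf))
  exact ⟨y, hy⟩

-- An ultrafilter selects limits at all times at once, replacing Helly's diagonal argument.
theorem exists_isMovementLimit (hT : 0 ≤ T) (hE1 : CondE1 E T x₀) (hE2 : CondE2 E P T x₀ CP)
    {u₀ : X} (hu₀ : IsStable E 0 u₀) : ∃ B s κ U u W, u 0 = u₀ ∧
      IsMovementLimit E T x₀ B s κ U (hyperfilter ℕ : Filter ℕ) u W := by
  obtain ⟨s, κ, hs⟩ := exists_isPartitionSequence hT
  choose U hU₀ hU using fun n => (hs.partition n).exists_isMinimizingMovement hE1 u₀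
  set B := (E 0 u₀ + dist x₀ u₀) * Real.exp (CP * T) * Real.exp (CP * T)
  have states_mem : ∀ n k, U n k ∈ uniformSublevel E T x₀ B := fun n k => by
    simpa only [hU₀ n] using (hU n).mem_uniformSublevel hE1 hE2 k
  have compact := hE1.isCompact_uniformSublevel (B := B) hT
  obtain ⟨R, hR⟩ := compact.isBounded.subset_closedBall x₀
  have variation_mem : ∀ n k, discreteVariation (U n) k ∈ Icc 0 (E 0 u₀ + CP * B * T + R) := by
    refine fun n k => ⟨Finset.sum_nonneg fun _ _ => dist_nonneg, ?_⟩
    rw [← hU₀ n]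
    exact (hU n).discreteVariation_le hE1 hE2 (states_mem n)
      (Metric.mem_closedBall'.1 (hR (states_mem n k)))
  choose u hu using fun t => exists_tendsto_of_isCompact compact (hyperfilter ℕ)
    (fun n => states_mem n (κ n t))
  choose W hW using fun t => exists_tendsto_of_isCompact isCompact_Icc (hyperfilter ℕ)
    (fun n => variation_mem n (κ n t))
  refine ⟨B, s, κ, U, u, W, tendsto_nhds_unique (hu 0) ?_, hs, hU, fun n => (hU₀ n).symm ▸ hu₀,
    states_mem, Nat.hyperfilter_le_atTop, fun t _ => hu t, fun t _ => hW t⟩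
  simp only [hs.index_zero, hU₀]
  exact tendsto_const_nhds

end MovementLimits

section EnergyBalance

/-- A curve `u` of stable states along which the energy increases by at most the work of the power
minus the increments of a function `W` that controls the variation of `u`: what minimizing
movements provide in the limit. Here `W` may still exceed the variation of `u`. -/
structure IsDissipativeCurve (E P : ℝ → X → ℝ) (T : ℝ) (x₀ : X) (CP B : ℝ) (u : ℝ → X)
    (W : ℝ → ℝ) : Prop where
  isStable : ∀ t ∈ Icc 0 T, IsStable E t (u t)
  mem_uniformSublevel : ∀ t ∈ Icc 0 T, u t ∈ uniformSublevel E T x₀ B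
  majorant : IsVariationMajorant u W (Icc 0 T)
  sub_le : ∀ a ∈ Icc 0 T, ∀ b ∈ Icc 0 T, a ≤ b →
    (E b (u b) + W b) - (E a (u a) + W a) ≤ CP * B * (b - a)
  eventually_sub_le : ∀ t ∈ Ico 0 T, ContinuousWithinAt W (Icc 0 T) t → ∀ r > P t (u t),
    ∀ᶠ b in 𝓝[>] t, (E b (u b) + W b) - (E t (u t) + W t) ≤ r * (b - t)

theorem IsMovementLimit.isDissipativeCurve {s : ℕ → ℕ → ℝ} {κ : ℕ → ℝ → ℕ} {U : ℕ → ℕ → X}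
    {l : Filter ℕ} [l.NeBot] {u : ℝ → X} {W : ℝ → ℝ} (h : IsMovementLimit E T x₀ B s κ U l u W)
    (hE1 : CondE1 E T x₀) (hE2 : CondE2 E P T x₀ CP) (hE3 : CondE3 E P T) :
    IsDissipativeCurve E P T x₀ CP B u W where
  isStable _ ht := h.isStable hE1 hE2 ht
  mem_uniformSublevel _ ht := h.state_mem_uniformSublevel hE1 ht
  majorant := h.isVariationMajorant
  sub_le _ ha _ hb hab := h.energy_add_variation_sub_le hE1 hE2 ha hb hab
  eventually_sub_le _ ht hW _ hr := h.eventually_energy_add_variation_sub_le hE1 hE2 hE3 ht hW hr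

variable {u : ℝ → X} {W D : ℝ → ℝ} {t a b : ℝ}

theorem IsVariationMajorant.energy_sub_le {S : Set ℝ} (hD : IsVariationMajorant u D S)
    (hu : IsStable E a (u a)) (ha : a ∈ S) (hb : b ∈ S) (hab : a ≤ b) :
    E b (u b) - E a (u b) ≤ (E b (u b) + D b) - (E a (u a) + D a) := by
  linarith [hu (u b), hD ha hb hab]

theorem IsVariationMajorant.power_le_deriv (hD : IsVariationMajorant u D (Icc 0 T))
    (hE2 : CondE2 E P T x₀ CP) (hu : ∀ t ∈ Icc 0 T, IsStable E t (u t)) (ht : t ∈ Ioo 0 T)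
    (hd : DifferentiableAt ℝ (fun t => E t (u t) + D t) t) :
    P t (u t) ≤ deriv (fun t => E t (u t) + D t) t := by
  have htT := Ioo_subset_Icc_self ht
  refine le_deriv_of_eventually_le_sub hd fun r hr => ?_
  have lt_energy_sub := hE2.eventually_lt_energy_sub htT hr
  rw [nhdsWithin_Ico_eq_nhdsLT ht.1] at lt_energy_sub
  filter_upwards [lt_energy_sub, Ioo_mem_nhdsLT ht.1] with z hz hzt
  have hzT : z ∈ Icc 0 T := ⟨hzt.1.le, hzt.2.le.trans htT.2⟩
  exact hz.le.trans (hD.energy_sub_le (hu z hzT) hzT htT hzt.2.le)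

theorem IsDissipativeCurve.lipschitzOnWith (h : IsDissipativeCurve E P T x₀ CP B u W)
    (hE1 : CondE1 E T x₀) (hE2 : CondE2 E P T x₀ CP) (hD : IsVariationMajorant u D (Icc 0 T))
    (hDW : ∀ a ∈ Icc 0 T, ∀ b ∈ Icc 0 T, a ≤ b → D b - D a ≤ W b - W a) :
    LipschitzOnWith (CP * B).toNNReal (fun t => E t (u t) + D t) (Icc 0 T) := by
  refine lipschitzOnWith_of_abs_sub_le fun a ha b hb hab => ?_
  have lower := hD.energy_sub_le (h.isStable a ha) ha hb hab
  have energy_sub := (abs_le.1 (hE2.abs_energy_sub_le hE1 (h.mem_uniformSublevel b hb) ha hb)).1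
  rw [abs_of_nonneg (sub_nonneg.2 hab)] at energy_sub
  exact abs_le.2 ⟨energy_sub.trans lower, by linarith [h.sub_le a ha b hb hab, hDW a ha b hb hab]⟩

theorem IsDissipativeCurve.ae_deriv_eq (h : IsDissipativeCurve E P T x₀ CP B u W)
    (hE1 : CondE1 E T x₀) (hE2 : CondE2 E P T x₀ CP) :
    ∀ᵐ t ∂volume.restrict (Ioo 0 T), deriv (fun t => E t (u t) + W t) t = P t (u t) := by
  filter_upwards [ae_continuousWithinAt_of_monotoneOn h.majorant.monotoneOn,
    ae_differentiableAt_of_lipschitzOnWith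
      (h.lipschitzOnWith hE1 hE2 h.majorant fun _ _ _ _ _ => le_rfl),
    ae_restrict_mem measurableSet_Ioo] with t hW hd ht
  exact le_antisymm
    (deriv_le_of_eventually_sub_le hd (h.eventually_sub_le t (Ioo_subset_Ico_self ht) hW))
    (h.majorant.power_le_deriv hE2 h.isStable ht hd)

theorem IsDissipativeCurve.ae_power_le_deriv (h : IsDissipativeCurve E P T x₀ CP B u W)
    (hE1 : CondE1 E T x₀) (hE2 : CondE2 E P T x₀ CP) (hD : IsVariationMajorant u D (Icc 0 T))
    (hDW : ∀ a ∈ Icc 0 T, ∀ b ∈ Icc 0 T, a ≤ b → D b - D a ≤ W b - W a) :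
    ∀ᵐ t ∂volume.restrict (Ioo 0 T), P t (u t) ≤ deriv (fun t => E t (u t) + D t) t := by
  filter_upwards [ae_differentiableAt_of_lipschitzOnWith (h.lipschitzOnWith hE1 hE2 hD hDW),
    ae_restrict_mem measurableSet_Ioo] with t hd ht
  exact hD.power_le_deriv hE2 h.isStable ht hd

theorem IsDissipativeCurve.energy_balance (h : IsDissipativeCurve E P T x₀ CP B u W)
    (hE1 : CondE1 E T x₀) (hE2 : CondE2 E P T x₀ CP) (hD : IsVariationMajorant u D (Icc 0 T))
    (hDW : ∀ a ∈ Icc 0 T, ∀ b ∈ Icc 0 T, a ≤ b → D b - D a ≤ W b - W a) (ht : t ∈ Icc 0 T) :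
    (E t (u t) + D t) - (E 0 (u 0) + D 0) = ∫ s in (0 : ℝ)..t, P s (u s) := by
  have Icc_subset : uIcc 0 t ⊆ Icc 0 T := by
    rw [uIcc_of_le ht.1]
    exact Icc_subset_Icc_right ht.2
  have Ioo_subset : Ioo 0 t ⊆ Ioo 0 T := Ioo_subset_Ioo_right ht.2
  refine sub_eq_integral_of_deriv_eq_of_le_deriv (G := fun t => E t (u t) + D t)
    (H := fun t => E t (u t) + W t) ht.1
    ((h.lipschitzOnWith hE1 hE2 hD hDW).mono Icc_subset).absolutelyContinuousOnInterval
    ((h.lipschitzOnWith hE1 hE2 h.majorant fun _ _ _ _ _ => le_rfl).mono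
      Icc_subset).absolutelyContinuousOnInterval ?_
    (ae_restrict_of_ae_restrict_of_subset Ioo_subset (h.ae_deriv_eq hE1 hE2))
    (ae_restrict_of_ae_restrict_of_subset Ioo_subset (h.ae_power_le_deriv hE1 hE2 hD hDW))
  linarith [hDW 0 ⟨le_rfl, ht.1.trans ht.2⟩ t ht ht.1]

theorem IsDissipativeCurve.isEnergeticSol (h : IsDissipativeCurve E P T x₀ CP B u W)
    (hE1 : CondE1 E T x₀) (hE2 : CondE2 E P T x₀ CP) (hT : 0 ≤ T) : IsEnergeticSol E P T u := by
  have h0 : (0 : ℝ) ∈ Icc 0 T := left_mem_Icc.2 hT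
  have bounded := h.majorant.locallyBoundedVariationOn
  have inter_eq : ∀ t ∈ Icc 0 T, Icc 0 T ∩ Icc 0 t = Icc 0 t := fun t ht =>
    inter_eq_right.2 (Icc_subset_Icc_right ht.2)
  refine ⟨?_, fun t ht => ⟨h.isStable t ht, ?_⟩⟩
  · rw [varD_eq_eVariationOn, ← inter_self (Icc 0 T)]
    exact bounded 0 T h0 (right_mem_Icc.2 hT)
  · have balance := h.energy_balance hE1 hE2 (isVariationMajorant_variationOnFromTo bounded h0)
      (fun a ha b hb hab => h.majorant.variationOnFromTo_sub_le h0 ha hb hab) ht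
    rw [variationOnFromTo.self, variationOnFromTo.eq_of_le u _ ht.1, inter_eq t ht,
      ← varD_eq_eVariationOn] at balance
    linarith

end EnergyBalance

theorem statement4_general
    {X : Type*} [MetricSpace X]
    (T : ℝ) (hT : 0 ≤ T) (E P : ℝ → X → ℝ) (x₀ : X) (CP : ℝ)
    (hE1 : CondE1 E T x₀) (hE2 : CondE2 E P T x₀ CP)
    (hE3 : CondE3 E P T)
    (u₀ : X) (hstab : ∀ v : X, E 0 u₀ ≤ E 0 v + dist u₀ v) :
    ∃ u : ℝ → X, u 0 = u₀ ∧ IsEnergeticSol E P T u := by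
  obtain ⟨B, s, κ, U, u, W, hu₀, hlimit⟩ := exists_isMovementLimit hT hE1 hE2 hstab
  have hcurve := hlimit.isDissipativeCurve hE1 hE2 hE3
  exact ⟨u, hu₀, hcurve.isEnergeticSol hE1 hE2 hT⟩

theorem statement4
    {X : Type*} [MetricSpace X] [CompleteSpace X]
    (T : ℝ) (hT : 0 < T) (E P : ℝ → X → ℝ) (x₀ : X) (CP : ℝ)
    (hE1 : CondE1 E T x₀) (hE2 : CondE2 E P T x₀ CP)
    (hE3 : CondE3 E P T)
    (u₀ : X) (hstab : ∀ v : X, E 0 u₀ ≤ E 0 v + dist u₀ v) :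
    ∃ u : ℝ → X, u 0 = u₀ ∧ IsEnergeticSol E P T u :=
  statement4_general T hT.le E P x₀ CP hE1 hE2 hE3 u₀ hstab

end
end

section
/- Let v : [a,b] → X be an absolutely continuous curve with metric derivative |v'| and let g : X → ℝ be positive and lower semicontinuous. Then ∫_a^b |v'|(s)·g(v(s)) ds = sup{ Σ_{i=1}^N d(v(σ_{i−1}),v(σ_i)) · inf_{σ∈[σ_{i−1},σ_i]} g(v(σ)) : a ≤ σ₀ < σ₁ < ... < σ_N ≤ b a finite partition } =: S (both sides possibly +∞). In particular, the map s ↦ |v'|(s)·g(v(s)) is integrable on [a,b] if and only if S < ∞. -/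
open Filter MeasureTheory Topology Set
open scoped ENNReal

noncomputable section

variable {X : Type*} [MetricSpace X]

/-- The supremum `S` of the Riemann-type sums appearing in Lemma A.1: over finite increasing
families of points of `[a,b]`, the sums of `d(v(σ_{i}),v(σ_{i+1})) · inf_{[σ_i,σ_{i+1}]} g∘v`. -/
def partSum {X : Type*} [MetricSpace X] (g : X → ℝ) (v : ℝ → X) (a b : ℝ) : ℝ≥0∞ :=
  ⨆ (N : ℕ) (σ : ℕ → ℝ)
    (_ : (∀ i, i ≤ N → σ i ∈ Icc a b) ∧ ∀ i, i < N → σ i < σ (i + 1)),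
    ∑ i ∈ Finset.range N,
      edist (v (σ i)) (v (σ (i + 1)))
        * ENNReal.ofReal (sInf (g '' (v '' Icc (σ i) (σ (i + 1)))))

/-!
Let `c` be countable with `v '' [a, b] ⊆ closure c`. Each `t ↦ dist (v t) z` with `z ∈ c` is a real
absolutely continuous function, and distances in the range of `v` are recovered from these
functions. Hence `w = sup_{z ∈ c} |(dist (v ·) z)'|` satisfies `d(v(s), v(t)) ≤ ∫ₛᵗ w`, while `w` is
a.e. at most the lower limit of the difference quotients of `v`; by Lebesgue differentiation `w` is
a.e. the metric derivative.

On an interval of a partition, `d(v(p), v(q)) · inf g ≤ ∫ w · g(v)`, so `S` is at most the integral.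
Conversely, the lower bound of difference quotients by `w` also holds for the quotients over
intervals `[p, q] ∋ x` shrinking to `x`, and lower semicontinuity handles the infimum of `g` there.
Fatou's lemma along equipartitions of mesh tending to `0` then bounds the integral by `S`.
-/

section Slope

variable {E : Type*} [NormedAddCommGroup E] [NormedSpace ℝ E] {f : ℝ → E} {f' : E} {x : ℝ}

theorem tendsto_slope_of_le_of_le {ι : Type*} {l : Filter ι} {p q : ι → ℝ}
    (hf : HasDerivAt f f' x) (hp : Tendsto p l (𝓝 x)) (hq : Tendsto q l (𝓝 x))
    (hpx : ∀ᶠ i in l, p i ≤ x) (hxq : ∀ᶠ i in l, x ≤ q i) (hpq : ∀ᶠ i in l, p i ≠ q i) :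
    Tendsto (fun i => slope f (p i) (q i)) l (𝓝 f') := by
  have hq_o : (fun i => f (q i) - f x - (q i - x) • f') =o[l] fun i => q i - p i := by
    refine (hf.isLittleO.comp_tendsto hq).trans_isBigO (.of_bound' ?_)
    filter_upwards [hpx, hxq] with i hi hi'
    exact abs_le_abs_of_nonneg (sub_nonneg.2 hi') (sub_le_sub_left hi _)
  have hp_o : (fun i => f (p i) - f x - (p i - x) • f') =o[l] fun i => q i - p i := by
    refine (hf.isLittleO.comp_tendsto hp).trans_isBigO (.of_bound' ?_)
    filter_upwards [hpx, hxq] with i hi hi'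
    exact (abs_sub_comm _ _).trans_le
      (abs_le_abs_of_nonneg (sub_nonneg.2 hi) (sub_le_sub_right hi' _))
  have hlim := (hq_o.sub hp_o).tendsto_inv_smul_nhds_zero.add_const f'
  rw [zero_add] at hlim
  refine hlim.congr' ?_
  filter_upwards [hpq] with i hi
  have hne : q i - p i ≠ 0 := sub_ne_zero.2 hi.symm
  nth_rw 3 [← inv_smul_smul₀ hne f']
  rw [← smul_add, slope_def_module]
  congr 1
  module

theorem enorm_slope {x y : ℝ} (hxy : x ≠ y) :
    ‖slope f x y‖ₑ = edist (f x) (f y) / edist x y := by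
  rw [slope_def_module, enorm_smul, enorm_inv (sub_ne_zero.2 hxy.symm), ← edist_eq_enorm_sub,
    ← edist_eq_enorm_sub, edist_comm y, edist_comm (f y), mul_comm, ENNReal.div_eq_inv_mul,
    mul_comm]

end Slope

section PseudoMetric

variable {Y : Type*} [PseudoMetricSpace Y] {u : ℝ → Y} {c : Set Y} {a b x : ℝ}

theorem limsup_edist_div_le_enorm_of_hasDerivAt {F : ℝ → ℝ} {F' : ℝ}
    (hu : ∀ᶠ y in 𝓝 x, dist (u y) (u x) ≤ dist (F y) (F x)) (hF : HasDerivAt F F' x) :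
    limsup (fun y => edist (u y) (u x) / edist y x) (𝓝[≠] x) ≤ ‖F'‖ₑ := by
  rw [← (hasDerivAt_iff_tendsto_slope.1 hF).enorm.limsup_eq]
  refine limsup_le_limsup ?_
  filter_upwards [nhdsWithin_le_nhds hu, self_mem_nhdsWithin] with y hy hyx
  rw [enorm_slope (Ne.symm hyx), edist_comm (F x), edist_comm x]
  gcongr
  rw [edist_dist, edist_dist]
  exact ENNReal.ofReal_le_ofReal hy

theorem absolutelyContinuousOnInterval_of_dist_le {Z : Type*} [PseudoMetricSpace Z] {F : ℝ → Z}
    (hF : AbsolutelyContinuousOnInterval F a b)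
    (hu : ∀ s ∈ uIcc a b, ∀ t ∈ uIcc a b, dist (u s) (u t) ≤ dist (F s) (F t)) :
    AbsolutelyContinuousOnInterval u a b := by
  rw [absolutelyContinuousOnInterval_iff] at hF ⊢
  intro ε hε
  obtain ⟨δ, hδ, hFδ⟩ := hF ε hε
  refine ⟨δ, hδ, fun I hI hlen => (Finset.sum_le_sum fun i hi => ?_).trans_lt (hFδ I hI hlen)⟩
  exact hu _ (hI.1 i hi).1 _ (hI.1 i hi).2

theorem absolutelyContinuousOnInterval_dist_const (hu : AbsolutelyContinuousOnInterval u a b)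
    (z : Y) : AbsolutelyContinuousOnInterval (fun t => dist (u t) z) a b :=
  absolutelyContinuousOnInterval_of_dist_le hu fun _ _ _ _ => abs_dist_sub_le _ _ _

theorem continuousOn_of_absolutelyContinuousOnInterval
    (hu : AbsolutelyContinuousOnInterval u a b) : ContinuousOn u (uIcc a b) := by
  intro x hx
  rw [ContinuousWithinAt, tendsto_iff_dist_tendsto_zero, ← dist_self (u x)]
  exact (absolutelyContinuousOnInterval_dist_const hu (u x)).continuousOn x hx

theorem dist_le_dist_intervalIntegral {f : ℝ → ℝ} (hf : IntegrableOn f (Icc a b))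
    (hu : ∀ s t, a ≤ s → s ≤ t → t ≤ b → dist (u s) (u t) ≤ ∫ r in s..t, f r) :
    ∀ s ∈ Icc a b, ∀ t ∈ Icc a b,
      dist (u s) (u t) ≤ dist (∫ r in a..s, f r) (∫ r in a..t, f r) := by
  have hint {t} (ht : t ∈ Icc a b) : IntervalIntegrable f volume a t :=
    (intervalIntegrable_iff_integrableOn_Icc_of_le ht.1).2
      (hf.mono_set (Icc_subset_Icc_right ht.2))
  intro s hs t ht
  wlog hst : s ≤ t generalizing s t
  · rw [dist_comm, dist_comm (∫ r in a..s, f r)]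
    exact this t ht s hs (le_of_not_ge hst)
  rw [dist_comm (∫ r in a..s, f r), Real.dist_eq,
    intervalIntegral.integral_interval_sub_left (hint ht) (hint hs)]
  exact (hu s t hs.1 hst ht.2).trans (le_abs_self _)

theorem ae_limsup_edist_div_le_enorm {f : ℝ → ℝ} (hf : IntegrableOn f (Icc a b))
    (hu : ∀ s t, a ≤ s → s ≤ t → t ≤ b → dist (u s) (u t) ≤ ∫ r in s..t, f r) :
    ∀ᵐ x ∂volume.restrict (Ioo a b),
      limsup (fun y => edist (u y) (u x) / edist y x) (𝓝[≠] x) ≤ ‖f x‖ₑ := by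
  rw [ae_restrict_iff' measurableSet_Ioo]
  rcases le_or_gt b a with hba | hab
  · simp [Ioo_eq_empty hba.not_gt]
  have hint := (intervalIntegrable_iff_integrableOn_Icc_of_le hab.le).2 hf
  filter_upwards [hint.ae_hasDerivAt_integral] with x hx hxab
  have hx' : x ∈ Icc a b := Ioo_subset_Icc_self hxab
  refine limsup_edist_div_le_enorm_of_hasDerivAt ?_
    (hx (Icc_subset_uIcc hx') a left_mem_uIcc)
  filter_upwards [Icc_mem_nhds hxab.1 hxab.2] with y hy
  exact dist_le_dist_intervalIntegral hf hu y hy x hx'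

theorem edist_le_of_forall_edist_dist_le {x y : Y} {C : ℝ≥0∞} (hy : y ∈ closure c)
    (h : ∀ z ∈ c, edist (dist x z) (dist y z) ≤ C) : edist x y ≤ C := by
  have hclosed : IsClosed {z | edist (dist x z) (dist y z) ≤ C} :=
    isClosed_le (by fun_prop) continuous_const
  have hyC : edist (dist x y) (dist y y) ≤ C := closure_minimal h hclosed hy
  simpa [edist_dist, Real.dist_eq] using hyC

/-- The upper envelope of the speeds `|d/ds dist (u s) z|` over the points `z ∈ c`. For `c`
countable and dense in the range of an absolutely continuous curve `u`, it is a measurable version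
of the metric derivative of `u`, with values in `ℝ≥0∞`. -/
def distSpeed (c : Set Y) (u : ℝ → Y) (s : ℝ) : ℝ≥0∞ :=
  ⨆ z ∈ c, ‖deriv (fun t => dist (u t) z) s‖ₑ

theorem measurable_distSpeed (hc : c.Countable) : Measurable (distSpeed c u) :=
  .biSup _ hc fun _ _ => (measurable_deriv _).enorm

theorem ae_differentiableAt_dist (hc : c.Countable) (hu : AbsolutelyContinuousOnInterval u a b) :
    ∀ᵐ s ∂volume.restrict (Ioo a b), ∀ z ∈ c, DifferentiableAt ℝ (fun t => dist (u t) z) s := by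
  rw [ae_ball_iff hc]
  intro z _
  rw [ae_restrict_iff' measurableSet_Ioo]
  filter_upwards [(absolutelyContinuousOnInterval_dist_const hu z).ae_differentiableAt]
    with s hs hsab
  exact hs (Icc_subset_uIcc (Ioo_subset_Icc_self hsab))

theorem distSpeed_le_liminf {ι : Type*} {l : Filter ι} [l.NeBot] {p q : ι → ℝ}
    (hu : ∀ z ∈ c, DifferentiableAt ℝ (fun t => dist (u t) z) x)
    (hp : Tendsto p l (𝓝 x)) (hq : Tendsto q l (𝓝 x))
    (hpx : ∀ᶠ i in l, p i ≤ x) (hxq : ∀ᶠ i in l, x ≤ q i) (hpq : ∀ᶠ i in l, p i ≠ q i) :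
    distSpeed c u x ≤ liminf (fun i => edist (u (p i)) (u (q i)) / edist (p i) (q i)) l := by
  refine iSup₂_le fun z hz => ?_
  rw [← (tendsto_slope_of_le_of_le (hu z hz).hasDerivAt hp hq hpx hxq hpq).enorm.liminf_eq]
  refine liminf_le_liminf ?_
  filter_upwards [hpq] with i hi
  rw [enorm_slope hi]
  gcongr
  rw [edist_dist, edist_dist]
  exact ENNReal.ofReal_le_ofReal (abs_dist_sub_le _ _ _)

theorem distSpeed_le_liminf_nhdsNE (hu : ∀ z ∈ c, DifferentiableAt ℝ (fun t => dist (u t) z) x) :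
    distSpeed c u x ≤ liminf (fun y => edist (u y) (u x) / edist y x) (𝓝[≠] x) := by
  have hmin : Tendsto (fun y => min y x) (𝓝[≠] x) (𝓝 x) :=
    (Continuous.tendsto' (f := (min · x)) (by fun_prop) x x (min_self x)).mono_left
      nhdsWithin_le_nhds
  have hmax : Tendsto (fun y => max y x) (𝓝[≠] x) (𝓝 x) :=
    (Continuous.tendsto' (f := (max · x)) (by fun_prop) x x (max_self x)).mono_left
      nhdsWithin_le_nhds
  have hne : ∀ᶠ y in 𝓝[≠] x, min y x ≠ max y x := by
    filter_upwards [self_mem_nhdsWithin] with y hy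
    exact inf_eq_sup.not.2 hy
  convert distSpeed_le_liminf hu hmin hmax (.of_forall fun y => min_le_right y x)
    (.of_forall fun y => le_max_right y x) hne using 3 with y
  rcases le_total y x with hyx | hxy
  · rw [min_eq_left hyx, max_eq_right hyx]
  · rw [min_eq_right hxy, max_eq_left hxy, edist_comm, edist_comm y]

theorem edist_le_lintegral_distSpeed (hab : a ≤ b) (hu : AbsolutelyContinuousOnInterval u a b)
    (hub : u b ∈ closure c) : edist (u a) (u b) ≤ ∫⁻ s in Ioc a b, distSpeed c u s := by
  refine edist_le_of_forall_edist_dist_le hub fun z hz => ?_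
  calc edist (dist (u a) z) (dist (u b) z)
      = ‖∫ s in Ioc a b, deriv (fun t => dist (u t) z) s‖ₑ := by
        rw [edist_comm, edist_eq_enorm_sub, ← intervalIntegral.integral_of_le hab,
          (absolutelyContinuousOnInterval_dist_const hu z).integral_deriv_eq_sub]
    _ ≤ ∫⁻ s in Ioc a b, ‖deriv (fun t => dist (u t) z) s‖ₑ := enorm_integral_le_lintegral_enorm _
    _ ≤ ∫⁻ s in Ioc a b, distSpeed c u s :=
        lintegral_mono fun s => le_iSup₂ (f := fun z _ => ‖deriv (fun t => dist (u t) z) s‖ₑ) z hz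

end PseudoMetric

section MetricDerivative

variable {v : ℝ → X} {c : Set X} {a b s : ℝ}

theorem IsAC.absolutelyContinuousOnInterval (hv : IsAC v a b) (hab : a ≤ b) :
    AbsolutelyContinuousOnInterval v a b := by
  obtain ⟨m, hm, hvm⟩ := hv
  have hint := (intervalIntegrable_iff_integrableOn_Icc_of_le hab).2 hm
  refine absolutelyContinuousOnInterval_of_dist_le
    (hint.absolutelyContinuousOnInterval_intervalIntegral left_mem_uIcc) ?_
  rw [uIcc_of_le hab]
  exact dist_le_dist_intervalIntegral hm hvm

theorem IsAC.continuousOn (hv : IsAC v a b) (hab : a ≤ b) : ContinuousOn v (Icc a b) :=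
  uIcc_of_le hab ▸
    continuousOn_of_absolutelyContinuousOnInterval (hv.absolutelyContinuousOnInterval hab)

theorem IsAC.lintegral_distSpeed_lt_top (hv : IsAC v a b) (hab : a ≤ b) (hc : c.Countable) :
    ∫⁻ s in Ioc a b, distSpeed c v s < ⊤ := by
  obtain ⟨m, hm, hvm⟩ := id hv
  rw [← restrict_Ioo_eq_restrict_Ioc]
  refine lt_of_le_of_lt (lintegral_mono_ae ?_) (hm.mono_set Ioo_subset_Icc_self).hasFiniteIntegral
  filter_upwards [ae_differentiableAt_dist hc (hv.absolutelyContinuousOnInterval hab),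
    ae_limsup_edist_div_le_enorm hm hvm] with s hdiff hlimsup
  exact (distSpeed_le_liminf_nhdsNE hdiff).trans ((liminf_le_limsup).trans hlimsup)

theorem IsAC.dist_le_integral_distSpeed (hv : IsAC v a b) (hc : c.Countable)
    (hvc : MapsTo v (Icc a b) (closure c)) {t : ℝ} (has : a ≤ s) (hst : s ≤ t) (htb : t ≤ b) :
    dist (v s) (v t) ≤ ∫ r in s..t, (distSpeed c v r).toReal := by
  have hab : a ≤ b := has.trans (hst.trans htb)
  have hfin : ∫⁻ r in Ioc s t, distSpeed c v r ≠ ⊤ :=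
    ((lintegral_mono_set (Ioc_subset_Ioc has htb)).trans_lt
      (hv.lintegral_distSpeed_lt_top hab hc)).ne
  have hsub : uIcc s t ⊆ uIcc a b := by
    rw [uIcc_of_le hst, uIcc_of_le hab]
    exact Icc_subset_Icc has htb
  have hmeas : Measurable (distSpeed c v) := measurable_distSpeed hc
  rw [intervalIntegral.integral_of_le hst,
    integral_toReal hmeas.aemeasurable (ae_lt_top hmeas hfin), dist_edist]
  exact ENNReal.toReal_mono hfin (edist_le_lintegral_distSpeed hst
    ((hv.absolutelyContinuousOnInterval hab).mono hsub) (hvc ⟨has.trans hst, htb⟩))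

theorem IsAC.ae_tendsto_edist_div (hv : IsAC v a b) (hab : a ≤ b) (hc : c.Countable)
    (hvc : MapsTo v (Icc a b) (closure c)) :
    ∀ᵐ s ∂volume.restrict (Ioo a b),
      Tendsto (fun y => edist (v y) (v s) / edist y s) (𝓝[≠] s) (𝓝 (distSpeed c v s)) := by
  have hmeas : Measurable (distSpeed c v) := measurable_distSpeed hc
  have hfin := (hv.lintegral_distSpeed_lt_top hab hc).ne
  have hint : IntegrableOn (fun s => (distSpeed c v s).toReal) (Icc a b) := by
    rw [integrableOn_Icc_iff_integrableOn_Ioc]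
    exact integrable_toReal_of_lintegral_ne_top hmeas.aemeasurable hfin
  have hlt := ae_lt_top hmeas hfin
  rw [← restrict_Ioo_eq_restrict_Ioc] at hlt
  filter_upwards [ae_differentiableAt_dist hc (hv.absolutelyContinuousOnInterval hab), hlt,
    ae_limsup_edist_div_le_enorm hint fun _ _ => hv.dist_le_integral_distSpeed hc hvc]
    with s hdiff hlt hlimsup
  rw [Real.enorm_toReal hlt.ne] at hlimsup
  exact tendsto_of_le_liminf_of_limsup_le (distSpeed_le_liminf_nhdsNE hdiff) hlimsup

theorem mder_eq_toReal_of_tendsto {L : ℝ≥0∞} (hL : L ≠ ⊤)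
    (h : Tendsto (fun y => edist (v y) (v s) / edist y s) (𝓝[≠] s) (𝓝 L)) :
    mder v s = L.toReal := by
  refine Tendsto.limUnder_eq (((ENNReal.tendsto_toReal hL).comp h).congr fun y => ?_)
  rw [Function.comp_apply, ENNReal.toReal_div, ← dist_edist, ← dist_edist, Real.dist_eq]

theorem IsAC.ae_distSpeed_ne_top_and_mder_eq (hv : IsAC v a b) (hab : a ≤ b) (hc : c.Countable)
    (hvc : MapsTo v (Icc a b) (closure c)) :
    ∀ᵐ s ∂volume.restrict (Ioc a b),
      distSpeed c v s ≠ ⊤ ∧ mder v s = (distSpeed c v s).toReal := by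
  have hlt := ae_lt_top (measurable_distSpeed hc) (hv.lintegral_distSpeed_lt_top hab hc).ne
  rw [← restrict_Ioo_eq_restrict_Ioc] at hlt ⊢
  filter_upwards [hlt, hv.ae_tendsto_edist_div hab hc hvc] with s hs hlim
  exact ⟨hs.ne, mder_eq_toReal_of_tendsto hs.ne hlim⟩

end MetricDerivative

section Partition

theorem sum_lintegral_Ioc {α : Type*} [LinearOrder α] [TopologicalSpace α] [OrderClosedTopology α]
    [MeasurableSpace α] [OpensMeasurableSpace α] {μ : Measure α} (f : α → ℝ≥0∞) {σ : ℕ → α}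
    {N : ℕ} (hσ : MonotoneOn σ (Iic N)) :
    ∑ i ∈ Finset.range N, ∫⁻ s in Ioc (σ i) (σ (i + 1)), f s ∂μ =
      ∫⁻ s in Ioc (σ 0) (σ N), f s ∂μ := by
  induction N with
  | zero => simp
  | succ n ih =>
    rw [Finset.sum_range_succ, ih (hσ.mono (Iic_subset_Iic.2 n.le_succ)),
      ← lintegral_union measurableSet_Ioc (Ioc_disjoint_Ioc_of_le le_rfl),
      Ioc_union_Ioc_eq_Ioc (hσ n.succ.zero_le n.le_succ n.zero_le)
        (hσ n.le_succ self_mem_Iic n.le_succ)]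

theorem ofReal_sInf_le_ofReal {S : Set ℝ} {y : ℝ} (hy : y ∈ S) :
    ENNReal.ofReal (sInf S) ≤ ENNReal.ofReal y := by
  by_cases hS : BddBelow S
  · exact ENNReal.ofReal_le_ofReal (csInf_le hS hy)
  · simp [Real.sInf_of_not_bddBelow hS]

theorem ofReal_le_liminf_ofReal_sInf_image {α ι : Type*} [TopologicalSpace α] {f : α → ℝ} {x : α}
    {l : Filter ι} {S : ι → Set α} (hf : LowerSemicontinuousAt f x)
    (hS : Tendsto S l (𝓝 x).smallSets) (hne : ∀ᶠ i in l, (S i).Nonempty) :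
    ENNReal.ofReal (f x) ≤ liminf (fun i => ENNReal.ofReal (sInf (f '' S i))) l := by
  refine le_of_forall_lt_imp_le_of_dense fun r hr => ?_
  have hr_top : r ≠ ⊤ := hr.ne_top
  have hlt : ∀ᶠ y in 𝓝 x, r.toReal < f y := hf _ ((ENNReal.lt_ofReal_iff_toReal_lt hr_top).1 hr)
  refine le_liminf_of_le (by isBoundedDefault) ?_
  filter_upwards [hS.eventually hlt.smallSets, hne] with i hi hne
  rw [← ENNReal.ofReal_toReal hr_top]
  exact ENNReal.ofReal_le_ofReal
    (le_csInf (hne.image f) (forall_mem_image.2 fun y hy => (hi y hy).le))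

theorem aemeasurable_restrict_of_lowerSemicontinuousOn {α : Type*} [TopologicalSpace α]
    [MeasurableSpace α] [OpensMeasurableSpace α] {μ : Measure α} {f : α → ℝ} {s : Set α}
    (hs : MeasurableSet s) (hf : LowerSemicontinuousOn f s) : AEMeasurable f (μ.restrict s) :=
  aemeasurable_restrict_of_measurable_subtype hs
    (lowerSemicontinuous_restrict_iff.2 hf).measurable

variable {Y : Type*} [PseudoMetricSpace Y] {g : Y → ℝ} {u : ℝ → Y} {c : Set Y} {a b p q x : ℝ}

/-- The contribution of a single interval `[p, q]` to the sums in `partSum`. -/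
def partTerm (g : Y → ℝ) (u : ℝ → Y) (p q : ℝ) : ℝ≥0∞ :=
  edist (u p) (u q) * ENNReal.ofReal (sInf (g '' (u '' Icc p q)))

theorem partTerm_le_lintegral (hc : c.Countable) (hpq : p ≤ q)
    (hu : AbsolutelyContinuousOnInterval u p q) (hq : u q ∈ closure c) :
    partTerm g u p q ≤ ∫⁻ s in Ioc p q, distSpeed c u s * ENNReal.ofReal (g (u s)) :=
  calc partTerm g u p q
      ≤ (∫⁻ s in Ioc p q, distSpeed c u s) * ENNReal.ofReal (sInf (g '' (u '' Icc p q))) :=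
        mul_le_mul_left (edist_le_lintegral_distSpeed hpq hu hq) _
    _ = ∫⁻ s in Ioc p q, distSpeed c u s * ENNReal.ofReal (sInf (g '' (u '' Icc p q))) :=
        (lintegral_mul_const _ (measurable_distSpeed hc)).symm
    _ ≤ ∫⁻ s in Ioc p q, distSpeed c u s * ENNReal.ofReal (g (u s)) :=
        setLIntegral_mono' measurableSet_Ioc fun _ hs => mul_le_mul_right
          (ofReal_sInf_le_ofReal
            (mem_image_of_mem g (mem_image_of_mem u (Ioc_subset_Icc_self hs)))) _

theorem distSpeed_mul_le_liminf_partTerm_div {ι : Type*} {l : Filter ι} [l.NeBot] {p q : ι → ℝ}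
    (hu : ∀ z ∈ c, DifferentiableAt ℝ (fun t => dist (u t) z) x)
    (hgu : LowerSemicontinuousAt (g ∘ u) x)
    (hp : Tendsto p l (𝓝 x)) (hq : Tendsto q l (𝓝 x))
    (hpx : ∀ᶠ i in l, p i ≤ x) (hxq : ∀ᶠ i in l, x ≤ q i) (hpq : ∀ᶠ i in l, p i ≠ q i) :
    distSpeed c u x * ENNReal.ofReal (g (u x)) ≤
      liminf (fun i => partTerm g u (p i) (q i) / edist (p i) (q i)) l := by
  have hne : ∀ᶠ i in l, (Icc (p i) (q i)).Nonempty := by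
    filter_upwards [hpx, hxq] with i hi hi' using ⟨x, hi, hi'⟩
  have hinf := ofReal_le_liminf_ofReal_sInf_image hgu (hp.Icc hq) hne
  calc distSpeed c u x * ENNReal.ofReal (g (u x))
      ≤ liminf (fun i => edist (u (p i)) (u (q i)) / edist (p i) (q i)) l *
          liminf (fun i => ENNReal.ofReal (sInf ((g ∘ u) '' Icc (p i) (q i)))) l :=
        mul_le_mul' (distSpeed_le_liminf hu hp hq hpx hxq hpq)
          hinf
    _ ≤ liminf ((fun i => edist (u (p i)) (u (q i)) / edist (p i) (q i)) *
          fun i => ENNReal.ofReal (sInf ((g ∘ u) '' Icc (p i) (q i)))) l := ENNReal.le_liminf_mul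
    _ = liminf (fun i => partTerm g u (p i) (q i) / edist (p i) (q i)) l := by
        congr 1 with i
        rw [Pi.mul_apply, partTerm, image_comp, ENNReal.mul_div_right_comm]

/-- The step function that is constant equal to `partTerm g u (σ k) (σ (k + 1)) / (σ (k + 1) - σ k)`
on each interval `(σ k, σ (k + 1)]` of a partition `σ 0 < ⋯ < σ N`. Its integral is the sum of the
terms of the partition. -/
def partStep (g : Y → ℝ) (u : ℝ → Y) (N : ℕ) (σ : ℕ → ℝ) (s : ℝ) : ℝ≥0∞ :=
  ∑ k ∈ Finset.range N, (Ioc (σ k) (σ (k + 1))).indicator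
    (fun _ => partTerm g u (σ k) (σ (k + 1)) / edist (σ k) (σ (k + 1))) s

theorem measurable_partStep (g : Y → ℝ) (u : ℝ → Y) (N : ℕ) (σ : ℕ → ℝ) :
    Measurable (partStep g u N σ) :=
  Finset.measurable_fun_sum _ fun _ _ => measurable_const.indicator measurableSet_Ioc

theorem lintegral_partStep {N : ℕ} {σ : ℕ → ℝ} (hσ : ∀ k < N, σ k < σ (k + 1)) :
    ∫⁻ s, partStep g u N σ s = ∑ k ∈ Finset.range N, partTerm g u (σ k) (σ (k + 1)) := by
  simp only [partStep]
  rw [lintegral_finsetSum _ fun _ _ => measurable_const.indicator measurableSet_Ioc]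
  refine Finset.sum_congr rfl fun k hk => ?_
  have hlt := hσ k (Finset.mem_range.1 hk)
  have hvol : volume (Ioc (σ k) (σ (k + 1))) = edist (σ k) (σ (k + 1)) := by
    rw [Real.volume_Ioc, edist_comm, edist_dist, Real.dist_eq, abs_of_pos (sub_pos.2 hlt)]
  rw [lintegral_indicator_const measurableSet_Ioc, hvol,
    ENNReal.div_mul_cancel (edist_pos.2 hlt.ne).ne' (edist_ne_top _ _)]

theorem partTerm_div_le_partStep {N k : ℕ} {σ : ℕ → ℝ} {s : ℝ} (hk : k < N)
    (hs : s ∈ Ioc (σ k) (σ (k + 1))) :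
    partTerm g u (σ k) (σ (k + 1)) / edist (σ k) (σ (k + 1)) ≤ partStep g u N σ s := by
  refine Eq.trans_le ?_ (Finset.single_le_sum_of_canonicallyOrdered (Finset.mem_range.2 hk))
  rw [indicator_of_mem hs]

theorem distSpeed_mul_le_liminf_partStep {ι : Type*} {l : Filter ι} [l.NeBot] {N : ι → ℕ}
    {σ : ι → ℕ → ℝ} {δ : ι → ℝ} (hu : ∀ z ∈ c, DifferentiableAt ℝ (fun t => dist (u t) z) x)
    (hgu : LowerSemicontinuousAt (g ∘ u) x) (hδ : Tendsto δ l (𝓝 0))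
    (hσδ : ∀ i, ∀ k < N i, σ i (k + 1) - σ i k ≤ δ i)
    (hx : ∀ i, x ∈ Ioc (σ i 0) (σ i (N i))) :
    distSpeed c u x * ENNReal.ofReal (g (u x)) ≤
      liminf (fun i => partStep g u (N i) (σ i) x) l := by
  have hmem (i) : ∃ k < N i, x ∈ Ioc (σ i k) (σ i (k + 1)) := by
    simpa only [mem_iUnion₂, Finset.mem_range, exists_prop] using
      Ioc_subset_biUnion_Ioc (N i) (σ i) (hx i)
  choose k hkN hxk using hmem
  have hp : Tendsto (fun i => σ i (k i)) l (𝓝 x) := by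
    refine tendsto_of_tendsto_of_tendsto_of_le_of_le (g := fun i => x - δ i) (h := fun _ => x)
      (by simpa using hδ.const_sub x) tendsto_const_nhds (fun i => ?_) fun i => (hxk i).1.le
    linarith [hσδ i _ (hkN i), (hxk i).2]
  have hq : Tendsto (fun i => σ i (k i + 1)) l (𝓝 x) := by
    refine tendsto_of_tendsto_of_tendsto_of_le_of_le (g := fun _ => x) (h := fun i => x + δ i)
      tendsto_const_nhds (by simpa using hδ.const_add x) (fun i => (hxk i).2) fun i => ?_
    linarith [hσδ i _ (hkN i), (hxk i).1]
  refine (distSpeed_mul_le_liminf_partTerm_div hu hgu hp hq (.of_forall fun i => (hxk i).1.le)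
    (.of_forall fun i => (hxk i).2)
    (.of_forall fun i => ((hxk i).1.trans_le (hxk i).2).ne)).trans ?_
  exact liminf_le_liminf (.of_forall fun i => partTerm_div_le_partStep (hkN i) (hxk i))

/-- The `k`-th point of the partition of `[a, b]` into `n + 1` intervals of equal length. -/
def equipartition (a b : ℝ) (n k : ℕ) : ℝ :=
  a + k * ((b - a) / (n + 1))

theorem equipartition_zero (a b : ℝ) (n : ℕ) : equipartition a b n 0 = a := by
  simp [equipartition]

theorem equipartition_last (a b : ℝ) (n : ℕ) : equipartition a b n (n + 1) = b := by
  rw [equipartition, Nat.cast_add_one, mul_div_cancel₀ _ n.cast_add_one_ne_zero,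
    add_sub_cancel]

theorem equipartition_succ_sub (a b : ℝ) (n k : ℕ) :
    equipartition a b n (k + 1) - equipartition a b n k = (b - a) / (n + 1) := by
  simp only [equipartition, Nat.cast_add_one]
  ring

theorem strictMono_equipartition (hab : a < b) (n : ℕ) : StrictMono (equipartition a b n) := by
  refine strictMono_nat_of_lt_succ fun k => sub_pos.1 ?_
  rw [equipartition_succ_sub]
  exact div_pos (sub_pos.2 hab) n.cast_add_one_pos

theorem equipartition_mem_Icc (hab : a < b) {n k : ℕ} (hk : k ≤ n + 1) :
    equipartition a b n k ∈ Icc a b := by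
  have hmono := (strictMono_equipartition hab n).monotone
  refine ⟨?_, ?_⟩
  · simpa only [equipartition_zero] using hmono k.zero_le
  · simpa only [equipartition_last] using hmono hk

end Partition

section PartSum

variable {g : X → ℝ} {v : ℝ → X} {c : Set X} {a b : ℝ}

theorem sum_partTerm_le_partSum {N : ℕ} {σ : ℕ → ℝ} (hmem : ∀ k ≤ N, σ k ∈ Icc a b)
    (hlt : ∀ k < N, σ k < σ (k + 1)) :
    ∑ k ∈ Finset.range N, partTerm g v (σ k) (σ (k + 1)) ≤ partSum g v a b :=
  le_iSup₂_of_le N σ (le_iSup_of_le ⟨hmem, hlt⟩ le_rfl)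

theorem partSum_le_lintegral (hab : a ≤ b) (hv : AbsolutelyContinuousOnInterval v a b)
    (hc : c.Countable) (hvc : MapsTo v (Icc a b) (closure c)) :
    partSum g v a b ≤ ∫⁻ s in Ioc a b, distSpeed c v s * ENNReal.ofReal (g (v s)) := by
  refine iSup₂_le fun N σ => iSup_le fun ⟨hmem, hlt⟩ => ?_
  calc ∑ k ∈ Finset.range N, partTerm g v (σ k) (σ (k + 1))
      ≤ ∑ k ∈ Finset.range N,
          ∫⁻ s in Ioc (σ k) (σ (k + 1)), distSpeed c v s * ENNReal.ofReal (g (v s)) := by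
        refine Finset.sum_le_sum fun k hk => ?_
        have hkN : k < N := Finset.mem_range.1 hk
        have hsub : uIcc (σ k) (σ (k + 1)) ⊆ uIcc a b := by
          rw [uIcc_of_le hab]
          exact uIcc_subset_Icc (hmem k hkN.le) (hmem (k + 1) hkN)
        exact partTerm_le_lintegral hc (hlt k hkN).le (hv.mono hsub) (hvc (hmem (k + 1) hkN))
    _ = ∫⁻ s in Ioc (σ 0) (σ N), distSpeed c v s * ENNReal.ofReal (g (v s)) :=
        sum_lintegral_Ioc _ (strictMonoOn_Iic_of_lt_succ hlt).monotoneOn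
    _ ≤ ∫⁻ s in Ioc a b, distSpeed c v s * ENNReal.ofReal (g (v s)) :=
        lintegral_mono_set (Ioc_subset_Ioc (hmem 0 N.zero_le).1 (hmem N le_rfl).2)

theorem lintegral_le_partSum (hab : a < b) (hv : AbsolutelyContinuousOnInterval v a b)
    (hc : c.Countable) (hgv : LowerSemicontinuousOn (g ∘ v) (Icc a b)) :
    ∫⁻ s in Ioc a b, distSpeed c v s * ENNReal.ofReal (g (v s)) ≤ partSum g v a b := by
  have hmesh : Tendsto (fun n : ℕ => (b - a) / (n + 1)) atTop (𝓝 0) := by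
    simpa [Function.comp_def] using
      (tendsto_const_div_atTop_nhds_zero_nat (b - a)).comp (tendsto_add_atTop_nat 1)
  have hpointwise : ∀ᵐ s ∂volume.restrict (Ioo a b), distSpeed c v s * ENNReal.ofReal (g (v s)) ≤
      liminf (fun n => partStep g v (n + 1) (equipartition a b n) s) atTop := by
    filter_upwards [ae_differentiableAt_dist hc hv, ae_restrict_mem measurableSet_Ioo]
      with s hdiff hs
    have hlsc : LowerSemicontinuousAt (g ∘ v) s := fun y hy =>
      nhdsWithin_eq_nhds.2 (Icc_mem_nhds hs.1 hs.2) ▸ hgv s (Ioo_subset_Icc_self hs) y hy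
    refine distSpeed_mul_le_liminf_partStep hdiff hlsc hmesh
      (fun n k _ => (equipartition_succ_sub a b n k).le) fun n => ?_
    rw [equipartition_zero, equipartition_last]
    exact Ioo_subset_Ioc_self hs
  have hlt (n : ℕ) : ∀ k < n + 1, equipartition a b n k < equipartition a b n (k + 1) :=
    fun k _ => strictMono_equipartition hab n k.lt_succ_self
  calc ∫⁻ s in Ioc a b, distSpeed c v s * ENNReal.ofReal (g (v s))
      ≤ ∫⁻ s, liminf (fun n => partStep g v (n + 1) (equipartition a b n) s) atTop := by
        rw [← restrict_Ioo_eq_restrict_Ioc]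
        exact (lintegral_mono_ae hpointwise).trans (setLIntegral_le_lintegral _ _)
    _ ≤ liminf (fun n => ∫⁻ s, partStep g v (n + 1) (equipartition a b n) s) atTop :=
        lintegral_liminf_le fun n => measurable_partStep g v _ _
    _ ≤ liminf (fun _ => partSum g v a b) (atTop : Filter ℕ) := by
        refine liminf_le_liminf (.of_forall fun n => ?_)
        rw [lintegral_partStep (hlt n)]
        exact sum_partTerm_le_partSum (fun k => equipartition_mem_Icc hab) (hlt n)
    _ = partSum g v a b := liminf_const _

theorem partSum_eq_lintegral_distSpeed (hab : a ≤ b) (hv : AbsolutelyContinuousOnInterval v a b)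
    (hc : c.Countable) (hvc : MapsTo v (Icc a b) (closure c))
    (hgv : LowerSemicontinuousOn (g ∘ v) (Icc a b)) :
    partSum g v a b = ∫⁻ s in Ioc a b, distSpeed c v s * ENNReal.ofReal (g (v s)) := by
  refine (partSum_le_lintegral hab hv hc hvc).antisymm ?_
  rcases hab.eq_or_lt with rfl | hab
  · simp
  · exact lintegral_le_partSum hab hv hc hgv

end PartSum

theorem statement13_general {a b : ℝ} (hab : a ≤ b) {v : ℝ → X} (hv : IsAC v a b) {g : X → ℝ}
    (hg : ∀ s ∈ Icc a b, 0 ≤ g (v s)) (hgv : LowerSemicontinuousOn (g ∘ v) (Icc a b)) :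
    (∫⁻ s in Ioc a b, ENNReal.ofReal (mder v s) * ENNReal.ofReal (g (v s)))
        = partSum g v a b ∧
      (IntegrableOn (fun s => mder v s * g (v s)) (Icc a b) ↔ partSum g v a b ≠ ⊤) := by
  have hac := hv.absolutelyContinuousOnInterval hab
  obtain ⟨c, hc, hvc⟩ := (isCompact_Icc.image_of_continuousOn (hv.continuousOn hab)).isSeparable
  have hspeed := hv.ae_distSpeed_ne_top_and_mder_eq hab hc (image_subset_iff.1 hvc)
  have hlint : ∫⁻ s in Ioc a b, ENNReal.ofReal (mder v s) * ENNReal.ofReal (g (v s)) =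
      partSum g v a b := by
    rw [partSum_eq_lintegral_distSpeed hab hac hc (image_subset_iff.1 hvc) hgv]
    refine lintegral_congr_ae (hspeed.mono fun s ⟨hne, heq⟩ => ?_)
    simp only [heq, ENNReal.ofReal_toReal hne]
  have hnonneg : ∀ᵐ s ∂volume.restrict (Ioc a b), 0 ≤ mder v s ∧ 0 ≤ g (v s) := by
    filter_upwards [hspeed, ae_restrict_mem measurableSet_Ioc] with s hs hsab
    exact ⟨hs.2 ▸ ENNReal.toReal_nonneg, hg s (Ioc_subset_Icc_self hsab)⟩
  have hmeas : AEMeasurable (fun s => mder v s * g (v s)) (volume.restrict (Ioc a b)) :=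
    ((measurable_distSpeed hc).ennreal_toReal.aemeasurable.congr
      (hspeed.mono fun s hs => hs.2.symm)).mul
      ((aemeasurable_restrict_of_lowerSemicontinuousOn measurableSet_Icc hgv).mono_set
        Ioc_subset_Icc_self)
  refine ⟨hlint, ?_⟩
  rw [integrableOn_Icc_iff_integrableOn_Ioc, IntegrableOn, ← lintegral_ofReal_ne_top_iff_integrable
    hmeas.aestronglyMeasurable (hnonneg.mono fun s hs => mul_nonneg hs.1 hs.2), ← hlint]
  rw [lintegral_congr_ae (hnonneg.mono fun s hs => ENNReal.ofReal_mul hs.1)]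

theorem statement13
    {X : Type*} [MetricSpace X] [CompleteSpace X]
    (a b : ℝ) (hab : a ≤ b) (v : ℝ → X) (hv : IsAC v a b)
    (g : X → ℝ) (hgpos : ∀ x : X, 0 < g x) (hglsc : LowerSemicontinuous g) :
    (∫⁻ s in Ioc a b, ENNReal.ofReal (mder v s) * ENNReal.ofReal (g (v s)))
        = partSum g v a b ∧
      (IntegrableOn (fun s => mder v s * g (v s)) (Icc a b) ↔ partSum g v a b ≠ ⊤) :=
  statement13_general hab hv (fun s _ => (hgpos (v s)).le)
    ((hglsc.lowerSemicontinuousOn univ).comp (hv.continuousOn hab) (mapsTo_univ _ _))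

end
end
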